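/- arXiv:1810.04949 — 3 statements merged into one kernel-verified Lean document; each statement's English description precedes it below -/
import Mathlib

section
/- Let ρ > 0 and let f : (0,∞) → [0,∞) be a locally integrable function such that for some constants c₁, k > 0 one has f(t) ≤ c₁ + k ∫₀ᵗ (t−s)^{ρ−1} f(s) ds for all t > 0. Then there exist positive constants c₂ and c₃ (depending only on ρ and c₁) such that f(t) ≤ c₂ e^{c₃ k^{1/ρ} t} for all t > 0. -/
open MeasureTheory Real

/-!
Bellman's trick of weighting by `e^{-lt}` makes the singular kernel `k r^{ρ-1}` small: its Laplace
transform at `l` is `k Γ(ρ) / l^ρ`, which equals a prescribed `θ < 1` for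
`l = (Γ(ρ) / θ)^{1/ρ} k^{1/ρ}`. The Volterra operator is then a contraction of `L¹(e^{-lt} dt)`, and
`c / (1 - θ) e^{lt}` is a supersolution. The positive part of `f` minus this supersolution is
dominated by its own image under a positive contraction, so it vanishes.
-/

open Set
open scoped ENNReal

theorem ofReal_integral_le_lintegral_ofReal {α : Type*} [MeasurableSpace α] {μ : Measure α}
    (g : α → ℝ) : ENNReal.ofReal (∫ x, g x ∂μ) ≤ ∫⁻ x, .ofReal (g x) ∂μ := by
  by_cases hg : Integrable g μ
  · rw [integral_eq_lintegral_pos_part_sub_lintegral_neg_part hg]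
    exact (ENNReal.ofReal_le_ofReal (sub_le_self _ ENNReal.toReal_nonneg)).trans
      ENNReal.ofReal_toReal_le
  · simp only [integral_undef hg, ENNReal.ofReal_zero, zero_le]

section ComparisonPrinciple

variable {α : Type*} [MeasurableSpace α] {μ : Measure α} [SFinite μ]
  {K : α → α → ℝ≥0∞} {w : α → ℝ≥0∞} {θ : ℝ≥0∞}

theorem lintegral_mul_lintegral_kernel_le (hK : Measurable (Function.uncurry K))
    (hw : Measurable w) (hKw : ∀ y, ∫⁻ x, w x * K x y ∂μ ≤ θ * w y)
    {u : α → ℝ≥0∞} (hu : AEMeasurable u μ) :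
    ∫⁻ x, w x * ∫⁻ y, K x y * u y ∂μ ∂μ ≤ θ * ∫⁻ y, w y * u y ∂μ := by
  have hwK (y : α) : Measurable fun x ↦ w x * K x y := hw.mul hK.of_uncurry_right
  have hKu (x : α) : AEMeasurable (fun y ↦ K x y * u y) μ :=
    hK.of_uncurry_left.aemeasurable.mul hu
  calc ∫⁻ x, w x * ∫⁻ y, K x y * u y ∂μ ∂μ
      = ∫⁻ x, ∫⁻ y, w x * K x y * u y ∂μ ∂μ := by
        refine lintegral_congr fun x ↦ ?_
        simp only [mul_assoc, ← lintegral_const_mul'' _ (hKu x)]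
    _ = ∫⁻ y, ∫⁻ x, w x * K x y * u y ∂μ ∂μ :=
        lintegral_lintegral_swap <|
          ((hw.comp measurable_fst).mul hK).aemeasurable.mul hu.comp_snd
    _ = ∫⁻ y, (∫⁻ x, w x * K x y ∂μ) * u y ∂μ :=
        lintegral_congr fun y ↦ lintegral_mul_const _ (hwK y)
    _ ≤ ∫⁻ y, θ * (w y * u y) ∂μ := by
        refine lintegral_mono fun y ↦ ?_
        rw [← mul_assoc]
        exact mul_le_mul_left (hKw y) (u y)
    _ = θ * ∫⁻ y, w y * u y ∂μ := lintegral_const_mul'' _ (hw.aemeasurable.mul hu)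

theorem ae_eq_zero_of_le_lintegral_kernel (hK : Measurable (Function.uncurry K))
    (hw : Measurable w) (hw₀ : ∀ x, w x ≠ 0) (hKw : ∀ y, ∫⁻ x, w x * K x y ∂μ ≤ θ * w y)
    (hθ : θ < 1) {u : α → ℝ≥0∞} (hu : AEMeasurable u μ) (hfin : ∫⁻ x, w x * u x ∂μ ≠ ∞)
    (hle : ∀ᵐ x ∂μ, u x ≤ ∫⁻ y, K x y * u y ∂μ) :
    u =ᵐ[μ] 0 := by
  have contraction : ∫⁻ x, w x * u x ∂μ ≤ θ * ∫⁻ x, w x * u x ∂μ :=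
    calc ∫⁻ x, w x * u x ∂μ ≤ ∫⁻ x, w x * ∫⁻ y, K x y * u y ∂μ ∂μ := by
          refine lintegral_mono_ae ?_
          filter_upwards [hle] with x hx
          gcongr
      _ ≤ θ * ∫⁻ x, w x * u x ∂μ := lintegral_mul_lintegral_kernel_le hK hw hKw hu
  have integral_eq_zero : ∫⁻ x, w x * u x ∂μ = 0 := by
    by_contra hne
    have := ENNReal.mul_lt_mul_left hne hfin hθ
    rw [one_mul] at this
    exact this.not_ge contraction
  filter_upwards [(lintegral_eq_zero_iff' (hw.aemeasurable.mul hu)).1 integral_eq_zero] with x hx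
  exact (mul_eq_zero.1 hx).resolve_left (hw₀ x)

theorem ae_le_of_subsolution_of_supersolution (hK : Measurable (Function.uncurry K))
    (hw : Measurable w) (hw₀ : ∀ x, w x ≠ 0) (hKw : ∀ y, ∫⁻ x, w x * K x y ∂μ ≤ θ * w y)
    (hθ : θ < 1) {C G H : α → ℝ≥0∞} (hG : AEMeasurable G μ) (hH : AEMeasurable H μ)
    (hfin : ∫⁻ x, w x * G x ∂μ ≠ ∞)
    (hsub : ∀ᵐ x ∂μ, G x ≤ C x + ∫⁻ y, K x y * G y ∂μ)
    (hsuper : ∀ᵐ x ∂μ, C x + ∫⁻ y, K x y * H y ∂μ ≤ H x) :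
    G ≤ᵐ[μ] H := by
  have hKH (x : α) : AEMeasurable (fun y ↦ K x y * H y) μ :=
    hK.of_uncurry_left.aemeasurable.mul hH
  have excess_finite : ∫⁻ x, w x * (G x - H x) ∂μ ≠ ∞ :=
    ne_top_of_le_ne_top hfin <| lintegral_mono fun x ↦ by gcongr; exact tsub_le_self
  have excess_le : ∀ᵐ x ∂μ, G x - H x ≤ ∫⁻ y, K x y * (G y - H y) ∂μ := by
    filter_upwards [hsub, hsuper] with x hGx hHx
    refine tsub_le_iff_left.2 ?_
    calc G x ≤ C x + ∫⁻ y, K x y * G y ∂μ := hGx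
      _ ≤ C x + ∫⁻ y, (K x y * H y + K x y * (G y - H y)) ∂μ := by
          gcongr with y
          rw [← mul_add]
          gcongr
          exact le_add_tsub
      _ = C x + ∫⁻ y, K x y * H y ∂μ + ∫⁻ y, K x y * (G y - H y) ∂μ := by
          rw [lintegral_add_left' (hKH x), add_assoc]
      _ ≤ H x + ∫⁻ y, K x y * (G y - H y) ∂μ := by gcongr
  filter_upwards [ae_eq_zero_of_le_lintegral_kernel hK hw hw₀ hKw hθ (hG.sub hH)
    excess_finite excess_le] with x hx
  exact tsub_eq_zero_iff_le.1 hx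

end ComparisonPrinciple

section ConvolutionKernel

variable (κ : ℝ → ℝ≥0∞) (l : ℝ)

theorem lintegral_exp_neg_mul_sub (s : ℝ) :
    ∫⁻ t, .ofReal (exp (-(l * t))) * κ (t - s) =
      (∫⁻ r, .ofReal (exp (-(l * r))) * κ r) * .ofReal (exp (-(l * s))) := by
  rw [← lintegral_mul_const' _ _ ENNReal.ofReal_ne_top,
    ← lintegral_sub_right_eq_self (fun r ↦ _ * κ r * _) s]
  refine lintegral_congr fun t ↦ ?_
  rw [mul_right_comm, ← ENNReal.ofReal_mul (exp_nonneg _), ← exp_add]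
  ring_nf

theorem lintegral_sub_mul_exp (t : ℝ) :
    ∫⁻ s, κ (t - s) * .ofReal (exp (l * s)) =
      (∫⁻ r, .ofReal (exp (-(l * r))) * κ r) * .ofReal (exp (l * t)) := by
  rw [← lintegral_mul_const' _ _ ENNReal.ofReal_ne_top,
    ← lintegral_sub_left_eq_self (fun r ↦ _ * κ r * _) t]
  refine lintegral_congr fun s ↦ ?_
  rw [mul_right_comm, ← ENNReal.ofReal_mul (exp_nonneg _), ← exp_add, mul_comm]
  ring_nf

variable {κ l}

theorem le_mul_exp_of_le_add_setLIntegral_sub (hκ : Measurable κ)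
    (hκ_lt : ∫⁻ r, .ofReal (exp (-(l * r))) * κ r < 1) {C D : ℝ≥0∞}
    (hCD : C + (∫⁻ r, .ofReal (exp (-(l * r))) * κ r) * D ≤ D) {S : Set ℝ}
    (hS : MeasurableSet S) {G : ℝ → ℝ≥0∞} (hG : AEMeasurable G (volume.restrict S))
    (hfin : ∫⁻ t in S, .ofReal (exp (-(l * t))) * G t ≠ ∞)
    (hle : ∀ t ∈ S, G t ≤ C * .ofReal (exp (l * t)) + ∫⁻ s in S, κ (t - s) * G s) :
    ∀ t ∈ S, G t ≤ D * .ofReal (exp (l * t)) := by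
  have supersolution (t : ℝ) : C * .ofReal (exp (l * t)) +
      ∫⁻ s in S, κ (t - s) * (D * .ofReal (exp (l * s))) ≤ D * .ofReal (exp (l * t)) := by
    calc C * .ofReal (exp (l * t)) + ∫⁻ s in S, κ (t - s) * (D * .ofReal (exp (l * s)))
        ≤ C * .ofReal (exp (l * t)) + ∫⁻ s, D * (κ (t - s) * .ofReal (exp (l * s))) := by
          simp only [mul_left_comm D]
          gcongr
          exact Measure.restrict_le_self
      _ = (C + (∫⁻ r, .ofReal (exp (-(l * r))) * κ r) * D) * .ofReal (exp (l * t)) := by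
          rw [lintegral_const_mul _ (by fun_prop), lintegral_sub_mul_exp]
          ring
      _ ≤ D * .ofReal (exp (l * t)) := by gcongr
  have ae_bound : ∀ᵐ s ∂volume.restrict S, G s ≤ D * .ofReal (exp (l * s)) :=
    ae_le_of_subsolution_of_supersolution (K := fun t s ↦ κ (t - s))
      (w := fun t ↦ .ofReal (exp (-(l * t)))) (hκ.comp measurable_sub) (by fun_prop)
      (fun t ↦ (ENNReal.ofReal_pos.2 (exp_pos _)).ne')
      (fun s ↦ (setLIntegral_le_lintegral _ _).trans (lintegral_exp_neg_mul_sub κ l s).le)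
      hκ_lt hG (by fun_prop) hfin
      (ae_restrict_of_forall_mem hS hle) (.of_forall supersolution)
  intro t ht
  calc G t ≤ C * .ofReal (exp (l * t)) + ∫⁻ s in S, κ (t - s) * G s := hle t ht
    _ ≤ C * .ofReal (exp (l * t)) +
        ∫⁻ s in S, κ (t - s) * (D * .ofReal (exp (l * s))) := by
        refine add_le_add_right (lintegral_mono_ae ?_) _
        filter_upwards [ae_bound] with s hs
        gcongr
    _ ≤ D * .ofReal (exp (l * t)) := supersolution t

end ConvolutionKernel

section AbelKernel

/-- The Abel kernel `k r^(ρ-1)` of fractional integration, extended by zero to `r ≤ 0` so that a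
Volterra integral over `(0, t)` is the convolution with it. -/
noncomputable def abelKernel (k ρ : ℝ) : ℝ → ℝ≥0∞ :=
  (Ioi 0).indicator fun r ↦ .ofReal (k * r ^ (ρ - 1))

theorem measurable_abelKernel (k ρ : ℝ) : Measurable (abelKernel k ρ) :=
  .indicator (by fun_prop) measurableSet_Ioi

variable {k ρ : ℝ}

theorem lintegral_exp_neg_mul_abelKernel (hρ : 0 < ρ) (hk : 0 ≤ k) {l : ℝ} (hl : 0 < l) :
    ∫⁻ r, .ofReal (exp (-(l * r))) * abelKernel k ρ r = .ofReal (k * (Gamma ρ / l ^ ρ)) := by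
  have laplace : ∫ r in Ioi 0, r ^ (ρ - 1) * exp (-(l * r)) = Gamma ρ / l ^ ρ := by
    rw [integral_rpow_mul_exp_neg_mul_Ioi hρ hl, div_rpow zero_le_one hl.le, one_rpow,
      one_div_mul_eq_div]
  have integrable : IntegrableOn (fun r ↦ r ^ (ρ - 1) * exp (-(l * r))) (Ioi 0) :=
    .of_integral_ne_zero <| by
      rw [laplace]
      exact (div_pos (Gamma_pos_of_pos hρ) (rpow_pos_of_pos hl ρ)).ne'
  have nonneg : ∀ r ∈ Ioi (0 : ℝ), 0 ≤ k * (r ^ (ρ - 1) * exp (-(l * r))) := fun r hr ↦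
    mul_nonneg hk (mul_nonneg (rpow_nonneg (mem_Ioi.1 hr).le _) (exp_nonneg _))
  rw [← laplace, ← integral_const_mul, ofReal_integral_eq_lintegral_ofReal
    (integrable.const_mul k) (ae_restrict_of_forall_mem measurableSet_Ioi nonneg),
    ← lintegral_indicator measurableSet_Ioi]
  refine lintegral_congr fun r ↦ ?_
  by_cases hr : r ∈ Ioi 0
  · rw [abelKernel, indicator_of_mem hr, indicator_of_mem hr,
      ← ENNReal.ofReal_mul (exp_nonneg _)]
    ring_nf
  · rw [abelKernel, indicator_of_notMem hr, indicator_of_notMem hr, mul_zero]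

theorem lintegral_exp_neg_mul_abelKernel_eq_ofReal (hρ : 0 < ρ) (hk : 0 < k) {θ : ℝ}
    (hθ : 0 < θ) :
    ∫⁻ r, .ofReal (exp (-((Gamma ρ / θ) ^ (1 / ρ) * k ^ (1 / ρ) * r))) * abelKernel k ρ r =
      .ofReal θ := by
  have hΓ : Gamma ρ ≠ 0 := (Gamma_pos_of_pos hρ).ne'
  have hΓθ : 0 < Gamma ρ / θ := div_pos (Gamma_pos_of_pos hρ) hθ
  rw [lintegral_exp_neg_mul_abelKernel hρ hk.le (by positivity),
    ← mul_rpow hΓθ.le hk.le, one_div, rpow_inv_rpow (by positivity) hρ.ne']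
  field_simp

theorem ofReal_mul_integral_rpow_le_lintegral_abelKernel (hk : 0 ≤ k) {t T : ℝ} (htT : t ≤ T)
    (f : ℝ → ℝ) :
    ENNReal.ofReal (k * ∫ s in Ioo 0 t, (t - s) ^ (ρ - 1) * f s) ≤
      ∫⁻ s in Ioc 0 T, abelKernel k ρ (t - s) * .ofReal (f s) :=
  calc ENNReal.ofReal (k * ∫ s in Ioo 0 t, (t - s) ^ (ρ - 1) * f s)
      ≤ ∫⁻ s in Ioo 0 t, .ofReal (k * ((t - s) ^ (ρ - 1) * f s)) := by
        rw [← integral_const_mul]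
        exact ofReal_integral_le_lintegral_ofReal _
    _ = ∫⁻ s in Ioo 0 t, abelKernel k ρ (t - s) * .ofReal (f s) := by
        refine setLIntegral_congr_fun measurableSet_Ioo fun s hs ↦ ?_
        have hts : 0 < t - s := sub_pos.2 hs.2
        simp only [abelKernel, indicator_of_mem (mem_Ioi.2 hts)]
        rw [← ENNReal.ofReal_mul (by positivity), mul_assoc]
    _ ≤ ∫⁻ s in Ioc 0 T, abelKernel k ρ (t - s) * .ofReal (f s) :=
        lintegral_mono_set fun _ hs ↦ ⟨hs.1, hs.2.le.trans htT⟩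

end AbelKernel

section Integrability

variable {f : ℝ → ℝ} {p t T : ℝ}

theorem integrableOn_Icc_of_integrableOn_rpow_sub_mul {a b : ℝ} (hbt : b < t)
    (hf : IntegrableOn (fun s ↦ (t - s) ^ p * f s) (Icc a b)) : IntegrableOn f (Icc a b) := by
  have inverse_weight : ContinuousOn (fun s ↦ (t - s) ^ (-p)) (Icc a b) :=
    .rpow_const (by fun_prop) fun s hs ↦ .inl (sub_pos.2 (hs.2.trans_lt hbt)).ne'
  refine (hf.continuousOn_mul inverse_weight isCompact_Icc).congr_fun (fun s hs ↦ ?_)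
    measurableSet_Icc
  have hts : 0 < t - s := sub_pos.2 (hs.2.trans_lt hbt)
  simp only [← mul_assoc, ← rpow_add hts, neg_add_cancel, rpow_zero, one_mul]

theorem integrableOn_Ioc_of_integrableOn_rpow_sub_mul (hf : LocallyIntegrableOn f (Ioc 0 T))
    (ht : 0 < t) (hft : IntegrableOn (fun s ↦ (t - s) ^ p * f s) (Ioo 0 t)) :
    IntegrableOn f (Ioc 0 T) := by
  have near_zero : IntegrableOn f (Icc 0 (t / 2)) := by
    refine integrableOn_Icc_of_integrableOn_rpow_sub_mul (p := p) (half_lt_self ht) ?_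
    rw [integrableOn_Icc_iff_integrableOn_Ioo]
    exact hft.mono_set (Ioo_subset_Ioo_right (half_le_self ht.le))
  have away_from_zero : IntegrableOn f (Icc (t / 2) T) :=
    hf.integrableOn_compact_subset (Icc_subset_Ioc (half_pos ht) le_rfl) isCompact_Icc
  refine (near_zero.union away_from_zero).mono_set fun s hs ↦ ?_
  exact (le_total s (t / 2)).imp (fun h ↦ ⟨hs.1.le, h⟩) (fun h ↦ ⟨h, hs.2⟩)

/- Local integrability says nothing at `0`. If some integral on the right converges, it controls `f`
near `0`; otherwise they all take the junk value `0`, so that `f ≤ c`. -/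
theorem lintegral_ofReal_ne_top_of_le_add_integral_rpow {c k : ℝ}
    (hf : LocallyIntegrableOn f (Ioc 0 T))
    (hle : ∀ t ∈ Ioc 0 T, f t ≤ c + k * ∫ s in Ioo 0 t, (t - s) ^ p * f s) :
    ∫⁻ t in Ioc 0 T, .ofReal (f t) ≠ ∞ := by
  by_cases hconv : ∃ t ∈ Ioc 0 T, IntegrableOn (fun s ↦ (t - s) ^ p * f s) (Ioo 0 t)
  · obtain ⟨t, ht, hft⟩ := hconv
    exact (integrableOn_Ioc_of_integrableOn_rpow_sub_mul hf ht.1 hft).lintegral_lt_top.ne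
  · push Not at hconv
    refine (setLIntegral_lt_top_of_le_nnreal measure_Ioc_lt_top.ne
      ⟨c.toNNReal, fun t ht ↦ ENNReal.ofReal_le_ofReal ?_⟩).ne
    have := hle t ht
    rwa [integral_undef (hconv t ht), mul_zero, add_zero] at this

end Integrability

theorem fractional_gronwall_general {ρ c k θ T : ℝ} (hρ : 0 < ρ) (hc : 0 ≤ c) (hk : 0 < k)
    (hθ_pos : 0 < θ) (hθ_lt : θ < 1) {f : ℝ → ℝ} (hf : LocallyIntegrableOn f (Ioc 0 T))
    (hle : ∀ t ∈ Ioc 0 T, f t ≤ c + k * ∫ s in Ioo 0 t, (t - s) ^ (ρ - 1) * f s) :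
    ∀ t ∈ Ioc 0 T, f t ≤ c / (1 - θ) * exp ((Gamma ρ / θ) ^ (1 / ρ) * k ^ (1 / ρ) * t) := by
  have : 0 < Gamma ρ := Gamma_pos_of_pos hρ
  have hθ_sub : 0 < 1 - θ := sub_pos.2 hθ_lt
  set l : ℝ := (Gamma ρ / θ) ^ (1 / ρ) * k ^ (1 / ρ)
  have hl : 0 < l := by positivity
  have laplace : ∫⁻ r, .ofReal (exp (-(l * r))) * abelKernel k ρ r = .ofReal θ :=
    lintegral_exp_neg_mul_abelKernel_eq_ofReal hρ hk hθ_pos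
  have supersolution :
      ENNReal.ofReal c + .ofReal θ * .ofReal (c / (1 - θ)) ≤ .ofReal (c / (1 - θ)) := by
    rw [← ENNReal.ofReal_mul hθ_pos.le, ← ENNReal.ofReal_add hc (by positivity)]
    refine ENNReal.ofReal_le_ofReal (le_of_eq ?_)
    field_simp
    ring
  have weighted_finite :
      ∫⁻ t in Ioc 0 T, .ofReal (exp (-(l * t))) * ENNReal.ofReal (f t) ≠ ∞ := by
    refine ne_top_of_le_ne_top (lintegral_ofReal_ne_top_of_le_add_integral_rpow hf hle)
      (setLIntegral_mono' measurableSet_Ioc fun t ht ↦ mul_le_of_le_one_left' ?_)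
    exact ENNReal.ofReal_le_one.2
      (exp_le_one_iff.2 (neg_nonpos.2 (mul_nonneg hl.le ht.1.le)))
  have subsolution : ∀ t ∈ Ioc 0 T, ENNReal.ofReal (f t) ≤
      .ofReal c * .ofReal (exp (l * t)) +
        ∫⁻ s in Ioc 0 T, abelKernel k ρ (t - s) * .ofReal (f s) := fun t ht ↦
    calc ENNReal.ofReal (f t)
        ≤ .ofReal c + .ofReal (k * ∫ s in Ioo 0 t, (t - s) ^ (ρ - 1) * f s) :=
          (ENNReal.ofReal_le_ofReal (hle t ht)).trans ENNReal.ofReal_add_le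
      _ ≤ _ := add_le_add
          (le_mul_of_one_le_right' (ENNReal.one_le_ofReal.2
            (one_le_exp (mul_nonneg hl.le ht.1.le))))
          (ofReal_mul_integral_rpow_le_lintegral_abelKernel hk.le ht.2 f)
  intro t ht
  have bound := le_mul_exp_of_le_add_setLIntegral_sub (measurable_abelKernel k ρ)
    (by rw [laplace]; exact ENNReal.ofReal_lt_one.2 hθ_lt) (by rwa [laplace]) measurableSet_Ioc
    hf.aestronglyMeasurable.aemeasurable.ennreal_ofReal weighted_finite subsolution t ht
  rwa [← ENNReal.ofReal_mul (by positivity), ENNReal.ofReal_le_ofReal_iff (by positivity)]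
    at bound

/-- Henry's fractional Gronwall inequality: if a locally integrable nonnegative
function `f` on `(0,∞)` satisfies `f(t) ≤ c₁ + k ∫₀ᵗ (t-s)^{ρ-1} f(s) ds` for all
`t > 0`, then `f(t) ≤ c₂ e^{c₃ k^{1/ρ} t}`, with `c₂, c₃` depending only on `ρ, c₁`. -/
theorem fractional_gronwall (ρ c₁ : ℝ) (hρ : 0 < ρ) (hc₁ : 0 < c₁) :
    ∃ c₂ > (0 : ℝ), ∃ c₃ > (0 : ℝ), ∀ (k : ℝ), 0 < k → ∀ f : ℝ → ℝ,
      (∀ t, 0 < t → 0 ≤ f t) →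
      LocallyIntegrableOn f (Set.Ioi (0 : ℝ)) →
      (∀ t, 0 < t → f t ≤ c₁ + k * ∫ s in Set.Ioo (0 : ℝ) t, (t - s) ^ (ρ - 1) * f s) →
      ∀ t, 0 < t → f t ≤ c₂ * Real.exp (c₃ * k ^ (1 / ρ) * t) := by
  have : 0 < Gamma ρ := Gamma_pos_of_pos hρ
  refine ⟨c₁ / (1 - 1 / 2), by positivity, (Gamma ρ / (1 / 2)) ^ (1 / ρ), by positivity, ?_⟩
  exact fun k hk f _ hf hle t ht ↦ fractional_gronwall_general hρ hc₁.le hk (by norm_num)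
    (by norm_num) (hf.mono_set Ioc_subset_Ioi_self) (fun s hs ↦ hle s hs.1) t ⟨ht, le_rfl⟩
end

section
/- Suppose 0 < α < 2. Then there exist positive constants c₁ and c₂ (depending on d, α, ν) such that for all x ∈ ℝ^d and all t > 0: c₁ · min( t^{-d/α} , t / |x|^{d+α} ) ≤ p_t(x) ≤ c₂ · min( t^{-d/α} , t / |x|^{d+α} ). -/
open MeasureTheory Real
open scoped RealInnerProductSpace

/-- The heat kernel of the fractional Laplacian `-ν(-Δ)^(α/2)` on `ℝ^d`:
`p_t(x) = (2π)^{-d} ∫ e^{-i x·z} e^{-tν|z|^α} dz`. -/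
noncomputable def stableKernel (d : ℕ) (ν α t : ℝ) (x : EuclideanSpace ℝ (Fin d)) : ℝ :=
  ((2 * Real.pi) ^ d)⁻¹ *
    (∫ z : EuclideanSpace ℝ (Fin d),
      Complex.exp (-(Complex.I * (⟪x, z⟫ : ℝ))) *
        Complex.exp (-((t * ν * ‖z‖ ^ α : ℝ) : ℂ))).re

open Filter Topology Module ProbabilityTheory
open scoped NNReal

/-!
The function `e^{-τ|z|^α}` is the Laplace transform of a positive `α/2`-stable law `μ` at `|z|²`,
so its Fourier transform is an average over `μ` of Gaussians `fourierGaussian n s |x|`; the law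
`μ` itself is a limit of normalised sums of independent Pareto variables. After scaling `x` to
modulus one, the average is compared with integrals of exponentials, that is, with values of the
Laplace transform `e^{-w}`, `w = τ|x|^{-α}`. A Gaussian is at most a multiple of `1 - e^{-u}`,
whose integral `1 - e^{-w}` is at most `w`. It is at least a multiple of
`e^{-u} - 2e^{-2u} + e^{-Du}` as soon as `D > 3`, which makes the latter negative near `u = 0`,
where the Gaussian decays too fast to dominate a positive function of order `u`. The integral
`e^{-w} - 2e^{-bw} + e^{-cw}` with `b = 2^{α/2}` and `c = D^{α/2}` nevertheless grows linearly in
`w` when `c < 2b - 1`, and strict concavity of `y ↦ y^{α/2}` leaves room for such a `D`.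
-/

/-! ### Laplace transforms on the half-line -/

/-- The Laplace transform `l ↦ ∫ e^{-ls} dμ(s)` of a measure `μ` on the half-line `[0, ∞)`. -/
noncomputable def laplaceTransform (μ : Measure ℝ≥0) (l : ℝ) : ℝ :=
  ∫ s, exp (-(l * s)) ∂μ

lemma exp_neg_mul_coe_le_one {l : ℝ} (hl : 0 ≤ l) (s : ℝ≥0) : exp (-(l * s)) ≤ 1 :=
  exp_le_one_iff.2 (neg_nonpos.2 (by positivity))

lemma integrable_exp_neg_mul_coe (μ : Measure ℝ≥0) [IsFiniteMeasure μ] {l : ℝ} (hl : 0 ≤ l) :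
    Integrable (fun s : ℝ≥0 => exp (-(l * s))) μ :=
  .of_bound (C := 1) (by fun_prop) <| .of_forall fun s => by
    simpa using exp_neg_mul_coe_le_one hl s

lemma one_sub_laplaceTransform (μ : Measure ℝ≥0) [IsProbabilityMeasure μ] {l : ℝ} (hl : 0 ≤ l) :
    1 - laplaceTransform μ l = ∫ s : ℝ≥0, (1 - exp (-(l * s))) ∂μ := by
  rw [integral_sub (integrable_const 1) (integrable_exp_neg_mul_coe μ hl)]
  simp [laplaceTransform]

lemma laplaceTransform_zero (μ : Measure ℝ≥0) [IsProbabilityMeasure μ] :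
    laplaceTransform μ 0 = 1 := by
  simp [laplaceTransform]

lemma laplaceTransform_anti (μ : Measure ℝ≥0) [IsFiniteMeasure μ] {l l' : ℝ} (hl : 0 ≤ l)
    (hll' : l ≤ l') : laplaceTransform μ l' ≤ laplaceTransform μ l :=
  integral_mono (integrable_exp_neg_mul_coe μ (hl.trans hll')) (integrable_exp_neg_mul_coe μ hl)
    fun s => by dsimp only; gcongr

lemma tendsto_laplaceTransform_nhdsGT_zero (μ : Measure ℝ≥0) [IsProbabilityMeasure μ] :
    Tendsto (laplaceTransform μ) (𝓝[>] 0) (𝓝 1) := by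
  rw [← laplaceTransform_zero μ]
  refine tendsto_integral_filter_of_dominated_convergence (fun _ => 1)
    (.of_forall fun l => by fun_prop) ?_ (integrable_const 1) (.of_forall fun s => ?_)
  · filter_upwards [self_mem_nhdsWithin] with l hl
    exact .of_forall fun s => by simpa using exp_neg_mul_coe_le_one (Set.mem_Ioi.1 hl).le s
  · exact (Continuous.tendsto (by fun_prop) 0).mono_left nhdsWithin_le_nhds

lemma measureReal_Ioi_inv_le (μ : Measure ℝ≥0) [IsProbabilityMeasure μ] {l : ℝ≥0} (hl : 0 < l) :
    μ.real (Set.Ioi l⁻¹) ≤ 2 * (1 - laplaceTransform μ l) := by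
  have hnonneg (s : ℝ≥0) : 0 ≤ 1 - exp (-(l * s)) :=
    sub_nonneg.2 (exp_neg_mul_coe_le_one l.coe_nonneg s)
  have hmarkov := mul_meas_ge_le_integral_of_nonneg (.of_forall hnonneg)
    ((integrable_const 1).sub (integrable_exp_neg_mul_coe μ l.coe_nonneg)) (1 / 2)
  have hsubset : Set.Ioi l⁻¹ ⊆ {s : ℝ≥0 | 1 / 2 ≤ 1 - exp (-(l * s))} := fun s hs => by
    have hls : (1 : ℝ) ≤ l * s := by
      exact_mod_cast (inv_le_iff_one_le_mul₀' hl).1 (Set.mem_Ioi.1 hs).le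
    have hexp : exp (-(l * s)) ≤ exp (-1) := by gcongr
    simp only [Set.mem_ofPred_eq]
    linarith [exp_neg_one_lt_half]
  rw [one_sub_laplaceTransform μ l.coe_nonneg]
  linarith [measureReal_mono (μ := μ) hsubset]

lemma isTightMeasureSet_of_one_sub_laplaceTransform_le {S : Set (ProbabilityMeasure ℝ≥0)}
    (hS : ∀ ε > 0, ∃ l : ℝ, 0 < l ∧ ∀ μ ∈ S, 1 - laplaceTransform μ l ≤ ε) :
    IsTightMeasureSet {(μ : Measure ℝ≥0) | μ ∈ S} := by
  refine isTightMeasureSet_iff_exists_isCompact_measure_compl_le.2 fun ε hε => ?_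
  obtain ⟨δ, hδ, hδε⟩ := ENNReal.lt_iff_exists_nnreal_btwn.1 hε
  obtain ⟨l, hl, hSl⟩ := hS (δ / 2) (by simpa using hδ)
  lift l to ℝ≥0 using hl.le
  refine ⟨Set.Icc 0 l⁻¹, isCompact_Icc, ?_⟩
  rintro _ ⟨μ, hμ, rfl⟩
  have hcompl : (Set.Icc 0 l⁻¹)ᶜ = Set.Ioi l⁻¹ := by ext; simp
  refine le_trans ?_ hδε.le
  rw [hcompl, ← ofReal_measureReal, ← ENNReal.ofReal_coe_nnreal]
  refine ENNReal.ofReal_le_ofReal ((measureReal_Ioi_inv_le _ (mod_cast hl)).trans ?_)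
  linarith [hSl μ hμ]

lemma exists_forall_one_sub_laplaceTransform_le {μ : ℕ → ProbabilityMeasure ℝ≥0} {L : ℝ → ℝ}
    (hlim : ∀ l > 0, Tendsto (fun n => laplaceTransform (μ n) l) atTop (𝓝 (L l)))
    (hL : Tendsto L (𝓝[>] 0) (𝓝 1)) {ε : ℝ} (hε : 0 < ε) :
    ∃ l : ℝ, 0 < l ∧ ∀ n, 1 - laplaceTransform (μ n) l ≤ ε := by
  obtain ⟨l₀, hLl₀, hl₀⟩ :=
    ((hL.eventually_const_lt (sub_lt_self 1 hε)).and self_mem_nhdsWithin).exists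
  obtain ⟨N, hN⟩ := eventually_atTop.1 ((hlim l₀ hl₀).eventually_const_lt hLl₀)
  have hinitial : ∀ᶠ l in 𝓝[>] (0 : ℝ), ∀ n ∈ Finset.range N, 1 - ε < laplaceTransform (μ n) l :=
    (eventually_all_finset _).2 fun n _ =>
      (tendsto_laplaceTransform_nhdsGT_zero (μ n)).eventually_const_lt (sub_lt_self 1 hε)
  obtain ⟨l, hl, hl_pos, hll₀⟩ := (hinitial.and (Ioc_mem_nhdsGT hl₀)).exists
  refine ⟨l, hl_pos, fun n => ?_⟩
  rcases lt_or_ge n N with hn | hn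
  · linarith [hl n (Finset.mem_range.2 hn)]
  · linarith [hN n hn, laplaceTransform_anti (μ n : Measure ℝ≥0) hl_pos.le hll₀]

theorem exists_laplaceTransform_eq_of_tendsto {μ : ℕ → ProbabilityMeasure ℝ≥0} {L : ℝ → ℝ}
    (hlim : ∀ l > 0, Tendsto (fun n => laplaceTransform (μ n) l) atTop (𝓝 (L l)))
    (hL : Tendsto L (𝓝[>] 0) (𝓝 1)) :
    ∃ ρ : ProbabilityMeasure ℝ≥0, ∀ l > 0, laplaceTransform ρ l = L l := by
  have htight : IsTightMeasureSet {(ρ : Measure ℝ≥0) | ρ ∈ Set.range μ} :=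
    isTightMeasureSet_of_one_sub_laplaceTransform_le fun ε hε => by
      simpa using exists_forall_one_sub_laplaceTransform_le hlim hL hε
  obtain ⟨ρ, -, hρ⟩ := (isCompact_closure_of_isTightMeasureSet htight).exists_mapClusterPt
    (f := atTop) (u := μ)
    (tendsto_principal.2 (.of_forall fun n => subset_closure (Set.mem_range_self n)))
  obtain ⟨U, hU, hμρ⟩ := mapClusterPt_iff_ultrafilter.1 hρ
  refine ⟨ρ, fun l hl => ?_⟩
  have hbound (s : ℝ≥0) : ‖exp (-(l * s))‖ ≤ 1 := by simpa using exp_neg_mul_coe_le_one hl.le s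
  exact tendsto_nhds_unique
    (ProbabilityMeasure.tendsto_iff_forall_integral_tendsto.1 hμρ
      (.ofNormedAddCommGroup (fun s : ℝ≥0 => exp (-(l * s))) (by fun_prop) 1 hbound))
    ((hlim l hl).mono_left hU)

lemma exists_laplaceTransform_eq_pow (μ : ProbabilityMeasure ℝ≥0) (n : ℕ) :
    ∃ ρ : ProbabilityMeasure ℝ≥0, ∀ l, laplaceTransform ρ l = laplaceTransform μ l ^ n := by
  have hsum : Measurable fun x : Fin n → ℝ≥0 => ∑ i, x i := by fun_prop
  refine ⟨⟨(Measure.pi fun _ => (μ : Measure ℝ≥0)).map fun x : Fin n → ℝ≥0 => ∑ i, x i,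
    Measure.isProbabilityMeasure_map hsum.aemeasurable⟩, fun l => ?_⟩
  have hexp (x : Fin n → ℝ≥0) :
      exp (-(l * (∑ i, x i : ℝ≥0))) = ∏ i, exp (-(l * x i)) := by
    rw [← exp_sum, Finset.sum_neg_distrib, ← Finset.mul_sum, NNReal.coe_sum]
  simp only [laplaceTransform, ProbabilityMeasure.coe_mk]
  rw [integral_map hsum.aemeasurable (by fun_prop)]
  simp_rw [hexp]
  simpa using integral_fintype_prod_eq_pow (ι := Fin n) (μ := (μ : Measure ℝ≥0))
    fun s : ℝ≥0 => exp (-(l * s))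

lemma exists_laplaceTransform_eq_exp_neg {μ : ℕ → ProbabilityMeasure ℝ≥0} {ψ : ℝ → ℝ}
    (hμ : ∀ l > 0, Tendsto (fun n : ℕ => ((n + 1 : ℕ) : ℝ) * (1 - laplaceTransform (μ n) l)) atTop
      (𝓝 (ψ l)))
    (hψ : Tendsto ψ (𝓝[>] 0) (𝓝 0)) :
    ∃ ρ : ProbabilityMeasure ℝ≥0, ∀ l > 0, laplaceTransform ρ l = exp (-ψ l) := by
  choose σ hσ using fun n => exists_laplaceTransform_eq_pow (μ n) (n + 1)
  refine exists_laplaceTransform_eq_of_tendsto (μ := σ) (fun l hl => ?_)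
    (by simpa using (hψ.neg).rexp)
  have hrate : Tendsto (fun k : ℕ => k * (laplaceTransform (μ (k - 1)) l - 1)) atTop (𝓝 (-ψ l)) :=
    (tendsto_add_atTop_iff_nat 1).1 ((hμ l hl).neg.congr fun n => by
      rw [Nat.add_sub_cancel]; ring)
  refine ((tendsto_one_add_pow_exp_of_tendsto hrate).comp (tendsto_add_atTop_nat 1)).congr
    fun n => ?_
  simp only [hσ, Function.comp_apply, Nat.add_sub_cancel, add_sub_cancel]

lemma ae_pos_of_tendsto_laplaceTransform {μ : Measure ℝ≥0} [IsFiniteMeasure μ]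
    (hμ : Tendsto (laplaceTransform μ) atTop (𝓝 0)) : ∀ᵐ s ∂μ, 0 < s := by
  have hzero : μ.real {0} ≤ 0 := by
    refine ge_of_tendsto hμ ((eventually_ge_atTop 0).mono fun l hl => ?_)
    calc μ.real {0} = ∫ s in {(0 : ℝ≥0)}, exp (-(l * s)) ∂μ := by simp [Measure.real]
      _ ≤ laplaceTransform μ l := setIntegral_le_integral (integrable_exp_neg_mul_coe μ hl)
          (.of_forall fun s => (exp_pos _).le)
  have hae : ∀ᵐ s ∂μ, s ∉ ({0} : Set ℝ≥0) :=
    measure_eq_zero_iff_ae_notMem.1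
      ((measureReal_eq_zero_iff).1 (hzero.antisymm measureReal_nonneg))
  exact hae.mono fun s hs => pos_iff_ne_zero.2 hs

/-! ### The positive stable laws -/

lemma one_sub_exp_neg_mul_rpow_nonneg {β l s : ℝ} (hl : 0 ≤ l) (hs : 0 ≤ s) :
    0 ≤ (1 - exp (-(l * s))) * s ^ (-(β + 1)) :=
  mul_nonneg (sub_nonneg.2 (exp_le_one_iff.2 (neg_nonpos.2 (by positivity)))) (by positivity)

lemma integrableOn_one_sub_exp_neg_mul_rpow {β l : ℝ} (hβ : 0 < β) (hβ1 : β < 1) (hl : 0 ≤ l) :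
    IntegrableOn (fun s : ℝ => (1 - exp (-(l * s))) * s ^ (-(β + 1))) (Set.Ioi 0) := by
  have hmeas : Measurable fun s : ℝ => (1 - exp (-(l * s))) * s ^ (-(β + 1)) := by fun_prop
  rw [← Set.Ioc_union_Ioi_eq_Ioi (zero_le_one : (0 : ℝ) ≤ 1)]
  refine .union ?_ ?_
  · have hdom : IntegrableOn (fun s : ℝ => l * s ^ (-β)) (Set.Ioc 0 1) :=
      (intervalIntegrable_iff_integrableOn_Ioc_of_le zero_le_one).1
        ((intervalIntegral.intervalIntegrable_rpow' (by linarith)).const_mul l)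
    refine hdom.mono' hmeas.aestronglyMeasurable ?_
    filter_upwards [ae_restrict_mem measurableSet_Ioc] with s ⟨hs, _⟩
    rw [norm_of_nonneg (one_sub_exp_neg_mul_rpow_nonneg hl hs.le)]
    calc (1 - exp (-(l * s))) * s ^ (-(β + 1)) ≤ l * s * s ^ (-(β + 1)) := by
          gcongr; linarith [one_sub_le_exp_neg (l * s)]
      _ = l * s ^ (-β) := by
          rw [mul_assoc, mul_comm s, ← rpow_add_one hs.ne']; congr 2; ring
  · have hdom : IntegrableOn (fun s : ℝ => s ^ (-(β + 1))) (Set.Ioi 1) :=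
      integrableOn_Ioi_rpow_of_lt (by linarith) one_pos
    refine hdom.mono' hmeas.aestronglyMeasurable ?_
    filter_upwards [ae_restrict_mem measurableSet_Ioi] with s hs
    have hs0 : 0 < s := one_pos.trans hs
    rw [norm_of_nonneg (one_sub_exp_neg_mul_rpow_nonneg hl hs0.le)]
    exact mul_le_of_le_one_left (by positivity) (by linarith [exp_pos (-(l * s))])

lemma integral_one_sub_exp_neg_mul_rpow {β l : ℝ} (hβ : β ≠ 0) (hl : 0 ≤ l) :
    ∫ s in Set.Ioi (0 : ℝ), (1 - exp (-(l * s))) * s ^ (-(β + 1)) =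
      l ^ β * ∫ s in Set.Ioi (0 : ℝ), (1 - exp (-s)) * s ^ (-(β + 1)) := by
  rcases hl.eq_or_lt with rfl | hl
  · simp [zero_rpow hβ]
  have hscale := integral_comp_mul_left_Ioi (fun s : ℝ => (1 - exp (-s)) * s ^ (-(β + 1))) 0 hl
  rw [mul_zero, smul_eq_mul, eq_inv_mul_iff_mul_eq₀ hl.ne'] at hscale
  rw [← hscale, ← mul_assoc, ← rpow_add_one hl.ne', ← integral_const_mul]
  refine setIntegral_congr_fun measurableSet_Ioi fun s (hs : 0 < s) => ?_
  have hcancel : l ^ (β + 1) * l ^ (-(β + 1)) = 1 := by rw [← rpow_add hl]; simp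
  rw [mul_rpow hl.le hs.le]
  linear_combination -(1 - exp (-(l * s))) * s ^ (-(β + 1)) * hcancel

lemma integral_one_sub_exp_neg_mul_rpow_pos {β : ℝ} (hβ : 0 < β) (hβ1 : β < 1) :
    0 < ∫ s in Set.Ioi (0 : ℝ), (1 - exp (-s)) * s ^ (-(β + 1)) := by
  have hint := integrableOn_one_sub_exp_neg_mul_rpow hβ hβ1 zero_le_one
  simp only [one_mul] at hint
  have hpos (s : ℝ) (hs : 0 < s) : 0 < (1 - exp (-s)) * s ^ (-(β + 1)) :=
    mul_pos (by simpa using hs) (rpow_pos_of_pos hs _)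
  rw [setIntegral_pos_iff_support_of_nonneg_ae
    (ae_restrict_of_forall_mem measurableSet_Ioi fun s hs => (hpos s hs).le) hint]
  have hsupport : Set.Ioi (0 : ℝ) ⊆
      Function.support (fun s : ℝ => (1 - exp (-s)) * s ^ (-(β + 1))) ∩ Set.Ioi 0 :=
    fun s hs => ⟨(hpos s hs).ne', hs⟩
  exact lt_of_lt_of_le (by simp) (measure_mono hsupport)

lemma integral_paretoMeasure {t r : ℝ} (ht : 0 < t) (hr : 0 < r) (f : ℝ → ℝ) :
    ∫ s, f s ∂paretoMeasure t r = r * t ^ r * ∫ s in Set.Ioi t, f s * s ^ (-(r + 1)) := by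
  have hmeas : Measurable (paretoPDF t r) := (measurable_paretoPDFReal t r).ennreal_ofReal
  rw [paretoMeasure, integral_withDensity_eq_integral_toReal_smul hmeas
    (.of_forall fun s => ENNReal.ofReal_lt_top),
    ← integral_Ici_eq_integral_Ioi, ← integral_const_mul, ← integral_indicator measurableSet_Ici]
  refine integral_congr_ae (.of_forall fun s => ?_)
  simp only [paretoPDF, smul_eq_mul, ENNReal.toReal_ofReal (paretoPDFReal_nonneg ht.le hr.le s)]
  by_cases hs : t ≤ s
  · rw [Set.indicator_of_mem (Set.mem_Ici.2 hs), paretoPDFReal, if_pos hs]; ring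
  · rw [Set.indicator_of_notMem (by simpa using hs), paretoPDFReal, if_neg hs, zero_mul]

lemma exists_laplaceTransform_eq_pareto {t r : ℝ} (ht : 0 < t) (hr : 0 < r) :
    ∃ μ : ProbabilityMeasure ℝ≥0, ∀ l ≥ 0, laplaceTransform μ l =
      1 - r * t ^ r * ∫ s in Set.Ioi t, (1 - exp (-(l * s))) * s ^ (-(r + 1)) := by
  have := isProbabilityMeasure_paretoMeasure ht hr
  have hmeas := measurable_real_toNNReal.aemeasurable (μ := paretoMeasure t r)
  have := Measure.isProbabilityMeasure_map hmeas
  refine ⟨⟨(paretoMeasure t r).map toNNReal, this⟩, fun l hl => ?_⟩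
  rw [eq_sub_iff_add_eq', ← eq_sub_iff_add_eq, ProbabilityMeasure.coe_mk,
    one_sub_laplaceTransform _ hl, integral_map hmeas (by fun_prop), integral_paretoMeasure ht hr]
  congr 1
  refine setIntegral_congr_fun measurableSet_Ioi fun s (hs : t < s) => ?_
  simp only [coe_toNNReal s (ht.trans hs).le]

lemma tendsto_setIntegral_Ioi_of_tendsto_zero {f : ℝ → ℝ} (hf : IntegrableOn f (Set.Ioi 0))
    {t : ℕ → ℝ} (ht_nonneg : ∀ k, 0 ≤ t k) (ht : Tendsto t atTop (𝓝 0)) :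
    Tendsto (fun k => ∫ s in Set.Ioi (t k), f s) atTop (𝓝 (∫ s in Set.Ioi 0, f s)) := by
  have hcover := (aecover_Ioi_of_Ioi (μ := volume) ht).integral_tendsto_of_countably_generated hf
  refine hcover.congr fun k => ?_
  rw [Measure.restrict_restrict measurableSet_Ioi,
    Set.inter_eq_left.2 (Set.Ioi_subset_Ioi (ht_nonneg k))]

lemma exists_laplaceTransform_eq_exp_neg_rpow {β τ : ℝ} (hβ : 0 < β) (hβ1 : β < 1) (hτ : 0 < τ) :
    ∃ μ : ProbabilityMeasure ℝ≥0, ∀ l ≥ 0, laplaceTransform μ l = exp (-(τ * l ^ β)) := by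
  set A := ∫ s in Set.Ioi (0 : ℝ), (1 - exp (-s)) * s ^ (-(β + 1))
  have hA : 0 < A := integral_one_sub_exp_neg_mul_rpow_pos hβ hβ1
  -- The Pareto scale for which the sum of `k` variables has Laplace exponent close to `τ * l ^ β`.
  let t (k : ℕ) : ℝ := (τ / (β * A) / k) ^ β⁻¹
  have ht_rpow (k : ℕ) : β * t k ^ β = τ / A / k := by
    rw [rpow_inv_rpow (by positivity) hβ.ne']; field_simp
  have ht_lim : Tendsto t atTop (𝓝 0) := by
    rw [← zero_rpow (inv_ne_zero hβ.ne')]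
    exact (tendsto_const_div_atTop_nhds_zero_nat _).rpow_const (.inr (by positivity))
  choose μ hμ using fun n =>
    exists_laplaceTransform_eq_pareto (show 0 < t (n + 1) by positivity) hβ
  have hexponent (l : ℝ) (hl : 0 < l) :
      Tendsto (fun n : ℕ => ((n + 1 : ℕ) : ℝ) * (1 - laplaceTransform (μ n) l)) atTop
        (𝓝 (τ * l ^ β)) := by
    have hint := (tendsto_setIntegral_Ioi_of_tendsto_zero
      (integrableOn_one_sub_exp_neg_mul_rpow hβ hβ1 hl.le) (fun k => by positivity)
      ht_lim).const_mul (τ / A)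
    rw [integral_one_sub_exp_neg_mul_rpow hβ.ne' hl.le,
      show τ / A * (l ^ β * A) = τ * l ^ β by field_simp] at hint
    refine (hint.comp (tendsto_add_atTop_nat 1)).congr fun n => ?_
    rw [hμ n l hl.le, sub_sub_cancel, ht_rpow, ← mul_assoc, mul_div_cancel₀ _ (by positivity)]
    rfl
  have hcont : ContinuousAt (fun l : ℝ => τ * l ^ β) 0 := by fun_prop (disch := positivity)
  obtain ⟨ρ, hρ⟩ := exists_laplaceTransform_eq_exp_neg hexponent <| by
    simpa [ContinuousAt, zero_rpow hβ.ne'] using hcont.mono_left nhdsWithin_le_nhds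
  refine ⟨ρ, fun l hl => ?_⟩
  rcases hl.eq_or_lt with rfl | hl
  · simp [laplaceTransform_zero, zero_rpow hβ.ne']
  · exact hρ l hl

/-! ### Subordination of Gaussians -/

section Subordination

variable {V : Type*} [NormedAddCommGroup V] [InnerProductSpace ℝ V] [FiniteDimensional ℝ V]
  [MeasurableSpace V] [BorelSpace V]

/-- The Fourier transform of the Gaussian `z ↦ e^{-s|z|²}` on an `n`-dimensional Euclidean space,
as a function of the modulus `r` of the frequency. -/
noncomputable def fourierGaussian (n : ℕ) (s r : ℝ) : ℝ :=
  (π / s) ^ ((n : ℝ) / 2) * exp (-(r ^ 2 / (4 * s)))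

lemma fourierGaussian_nonneg (n : ℕ) {s : ℝ} (hs : 0 ≤ s) (r : ℝ) : 0 ≤ fourierGaussian n s r := by
  unfold fourierGaussian; positivity

lemma fourierGaussian_anti (n : ℕ) {s r r' : ℝ} (hs : 0 ≤ s) (hr : 0 ≤ r) (hrr' : r ≤ r') :
    fourierGaussian n s r' ≤ fourierGaussian n s r := by
  unfold fourierGaussian; gcongr

lemma fourierGaussian_eq_rpow_mul (n : ℕ) {s r : ℝ} (hs : 0 ≤ s) (hr : 0 < r) :
    fourierGaussian n s r = r ^ (-(n : ℝ)) * fourierGaussian n (s / r ^ 2) 1 := by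
  have hpow : (r ^ 2) ^ ((n : ℝ) / 2) = r ^ (n : ℝ) := by
    rw [← rpow_natCast_mul hr.le]; congr 1; push_cast; ring
  rw [fourierGaussian, fourierGaussian, div_div_eq_mul_div, mul_div_right_comm,
    mul_rpow (by positivity) (by positivity), hpow, rpow_neg hr.le]
  have := (rpow_pos_of_pos hr n).ne'
  field_simp

lemma integral_cos_inner_mul_exp_neg_sq_norm_mul {s : ℝ} (hs : 0 < s) (x : V) :
    ∫ z, cos ⟪x, z⟫ * exp (-(‖z‖ ^ 2 * s)) = fourierGaussian (finrank ℝ V) s ‖x‖ := by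
  have hs' : 0 < (s : ℂ).re := by simpa using hs
  have hre (z : V) : (Complex.exp (-(s : ℂ) * (‖z‖ : ℂ) ^ 2 + Complex.I * (⟪x, z⟫ : ℝ))).re =
      cos ⟪x, z⟫ * exp (-(‖z‖ ^ 2 * s)) := by
    rw [Complex.exp_re, mul_comm, mul_comm _ s]
    simp [← Complex.ofReal_pow]
  have hvalue : ((π : ℂ) / s) ^ ((finrank ℝ V : ℂ) / 2) *
      Complex.exp (Complex.I ^ 2 * (‖x‖ : ℂ) ^ 2 / (4 * s)) =
      fourierGaussian (finrank ℝ V) s ‖x‖ := by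
    rw [fourierGaussian, Complex.ofReal_mul, Complex.ofReal_cpow (by positivity), Complex.I_sq]
    push_cast
    ring_nf
  simp_rw [← hre]
  exact (integral_re (GaussianFourier.integrable_cexp_neg_mul_sq_norm_add hs' Complex.I x)).trans
    (by rw [GaussianFourier.integral_cexp_neg_mul_sq_norm_add hs', hvalue]; rfl)

lemma integrable_prod_cos_inner_mul_exp_neg_sq_norm_mul {μ : Measure ℝ≥0} [IsFiniteMeasure μ]
    (hint : Integrable fun z : V => laplaceTransform μ (‖z‖ ^ 2)) (x : V) :
    Integrable (fun p : V × ℝ≥0 => cos ⟪x, p.1⟫ * exp (-(‖p.1‖ ^ 2 * p.2)))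
      (volume.prod μ) := by
  have hexp : Integrable (fun p : V × ℝ≥0 => exp (-(‖p.1‖ ^ 2 * p.2))) (volume.prod μ) := by
    refine (integrable_prod_iff (Continuous.aestronglyMeasurable (by fun_prop))).2
      ⟨.of_forall fun z => integrable_exp_neg_mul_coe μ (sq_nonneg ‖z‖), ?_⟩
    simpa [laplaceTransform] using hint
  have hcos : AEStronglyMeasurable (fun p : V × ℝ≥0 => cos ⟪x, p.1⟫) (volume.prod μ) :=
    Continuous.aestronglyMeasurable (by fun_prop)
  exact hexp.bdd_mul hcos (.of_forall fun p => abs_cos_le_one ⟪x, p.1⟫)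

lemma integrable_fourierGaussian {μ : Measure ℝ≥0} [IsFiniteMeasure μ] (hpos : ∀ᵐ s ∂μ, 0 < s)
    (hint : Integrable fun z : V => laplaceTransform μ (‖z‖ ^ 2)) (x : V) :
    Integrable (fun s : ℝ≥0 => fourierGaussian (finrank ℝ V) s ‖x‖) μ := by
  refine (integrable_prod_cos_inner_mul_exp_neg_sq_norm_mul hint x).integral_prod_right.congr ?_
  filter_upwards [hpos] with s hs
  exact integral_cos_inner_mul_exp_neg_sq_norm_mul (mod_cast hs) x

theorem integral_cos_inner_mul_laplaceTransform {μ : Measure ℝ≥0} [IsFiniteMeasure μ]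
    (hpos : ∀ᵐ s ∂μ, 0 < s) (hint : Integrable fun z : V => laplaceTransform μ (‖z‖ ^ 2)) (x : V) :
    ∫ z, cos ⟪x, z⟫ * laplaceTransform μ (‖z‖ ^ 2) =
      ∫ s : ℝ≥0, fourierGaussian (finrank ℝ V) s ‖x‖ ∂μ := by
  simp_rw [laplaceTransform, ← integral_const_mul]
  rw [integral_integral_swap (integrable_prod_cos_inner_mul_exp_neg_sq_norm_mul hint x)]
  refine integral_congr_ae ?_
  filter_upwards [hpos] with s hs
  exact integral_cos_inner_mul_exp_neg_sq_norm_mul (mod_cast hs) x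

end Subordination

/-! ### Gaussians and exponentials -/

section ExponentialBounds

lemma rpow_le_mul_exp_mul {a c w : ℝ} (ha : 0 ≤ a) (hc : 0 < c) (hw : 0 ≤ w) :
    w ^ a ≤ ((a + 1) / c) ^ a * exp (c * w) := by
  have hbase : w ≤ (a + 1) / c * exp (c * w / (a + 1)) := by
    calc w = (a + 1) / c * (c * w / (a + 1)) := by field_simp
      _ ≤ _ := by gcongr; linarith [add_one_le_exp (c * w / (a + 1))]
  have hfrac : a / (a + 1) ≤ 1 := div_le_one_of_le₀ (by linarith) (by positivity)
  calc w ^ a ≤ ((a + 1) / c * exp (c * w / (a + 1))) ^ a := by gcongr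
    _ = ((a + 1) / c) ^ a * exp (c * w * (a / (a + 1))) := by
        rw [mul_rpow (by positivity) (exp_pos _).le, ← exp_mul]; congr 2; ring
    _ ≤ ((a + 1) / c) ^ a * exp (c * w) := by
        have := mul_le_of_le_one_right (mul_nonneg hc.le hw) hfrac
        gcongr

lemma one_le_one_add_inv_mul_one_sub_exp_neg {u : ℝ} (hu : 0 < u) :
    1 ≤ (1 + u⁻¹) * (1 - exp (-u)) := by
  have hinv : exp (-u) ≤ (u + 1)⁻¹ := by
    rw [exp_neg]; gcongr; exact add_one_le_exp u
  calc (1 : ℝ) = (1 + u⁻¹) * (1 - (u + 1)⁻¹) := by field_simp; ring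
    _ ≤ _ := by gcongr

lemma exists_fourierGaussian_le_mul_one_sub_exp_neg (n : ℕ) :
    ∃ C > 0, ∀ u > 0, fourierGaussian n u 1 ≤ C * (1 - exp (-u)) := by
  set a : ℝ := n / 2
  set K : ℝ := ((a + 1) / (1 / 8)) ^ a
  refine ⟨π ^ a * K * 8, by positivity, fun u hu => ?_⟩
  have hpow : u⁻¹ ^ a ≤ K * exp (1 / 8 * u⁻¹) :=
    rpow_le_mul_exp_mul (by positivity) (by norm_num) (by positivity)
  have hlin : 1 + u⁻¹ ≤ 8 * exp (1 / 8 * u⁻¹) := by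
    linarith [add_one_le_exp (1 / 8 * u⁻¹)]
  have hone : 0 ≤ 1 - exp (-u) := by simpa using hu.le
  calc fourierGaussian n u 1
      = π ^ a * u⁻¹ ^ a * exp (-(1 / 4 * u⁻¹)) := by
        rw [fourierGaussian, div_eq_mul_inv, mul_rpow pi_pos.le (by positivity)]
        congr 2; ring
    _ ≤ π ^ a * (K * exp (1 / 8 * u⁻¹)) * exp (-(1 / 4 * u⁻¹)) *
          (8 * exp (1 / 8 * u⁻¹) * (1 - exp (-u))) := by
        refine (mul_le_mul_of_nonneg_right (by gcongr) (exp_pos _).le).trans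
          (le_mul_of_one_le_right (by positivity) ?_)
        exact (one_le_one_add_inv_mul_one_sub_exp_neg hu).trans (by gcongr)
    _ = π ^ a * K * 8 * (1 - exp (-u)) * exp (1 / 8 * u⁻¹ + 1 / 8 * u⁻¹ + -(1 / 4 * u⁻¹)) := by
        rw [exp_add, exp_add]; ring
    _ = π ^ a * K * 8 * (1 - exp (-u)) := by
        rw [show 1 / 8 * u⁻¹ + 1 / 8 * u⁻¹ + -(1 / 4 * u⁻¹) = 0 by ring, exp_zero, mul_one]

/-- The weighted second difference `e^{-w} - 2e^{-bw} + e^{-cw}`, which vanishes at `w = 0` and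
increases or decreases from there according to the sign of `2b - 1 - c`. -/
noncomputable def expSecondDiff (b c w : ℝ) : ℝ :=
  exp (-w) - 2 * exp (-(b * w)) + exp (-(c * w))

lemma expSecondDiff_zero (b c : ℝ) : expSecondDiff b c 0 = 0 := by
  norm_num [expSecondDiff]

lemma hasDerivAt_expSecondDiff_zero (b c : ℝ) :
    HasDerivAt (expSecondDiff b c) (2 * b - 1 - c) 0 := by
  have hexp (k : ℝ) : HasDerivAt (fun w => exp (-(k * w))) (-k) 0 := by
    simpa using ((hasDerivAt_id (0 : ℝ)).const_mul k).neg.exp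
  have hsum := ((hexp 1).fun_sub ((hexp b).const_mul 2)).fun_add (hexp c)
  simp only [one_mul] at hsum
  exact hsum.congr_deriv (by ring)

lemma expSecondDiff_le {b c w : ℝ} (hw : 0 ≤ w) (hc : 1 ≤ c) :
    expSecondDiff b c w ≤ 2 * exp (-w) := by
  have hcw : exp (-(c * w)) ≤ exp (-w) := exp_le_exp.2 (neg_le_neg (le_mul_of_one_le_left hw hc))
  rw [expSecondDiff]
  linarith [exp_pos (-(b * w))]

lemma exists_forall_mul_le_of_hasDerivAt_zero {f : ℝ → ℝ} {f' m : ℝ} (hf : HasDerivAt f f' 0)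
    (hf0 : f 0 = 0) (hm : m < f') : ∃ ε > 0, ∀ y, 0 < y → y ≤ ε → m * y ≤ f y := by
  have hslope := (hasDerivAt_iff_tendsto_slope_zero.1 hf).mono_left
    (nhdsWithin_mono 0 fun y (hy : y ∈ Set.Ioi (0 : ℝ)) => ne_of_gt hy)
  have hev : ∀ᶠ y in 𝓝[>] (0 : ℝ), m * y ≤ f y := by
    filter_upwards [hslope.eventually_const_lt hm, self_mem_nhdsWithin] with y hy hy0
    rw [zero_add, hf0, sub_zero, smul_eq_mul, ← div_eq_inv_mul, lt_div_iff₀ hy0] at hy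
    exact hy.le
  obtain ⟨ε, hε, hsub⟩ := mem_nhdsGT_iff_exists_Ioc_subset.1 hev
  exact ⟨ε, hε, fun y hy hyε => hsub ⟨hy, hyε⟩⟩

lemma exists_expSecondDiff_le_mul_fourierGaussian (n : ℕ) {D : ℝ} (hD : 3 < D) :
    ∃ C > 0, ∀ u > 0, expSecondDiff 2 D u ≤ C * fourierGaussian n u 1 := by
  obtain ⟨ε, hε, hneg⟩ := exists_forall_mul_le_of_hasDerivAt_zero (m := 0)
    (hasDerivAt_expSecondDiff_zero 2 D).neg (by simp [expSecondDiff_zero]) (by linarith)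
  set a : ℝ := n / 2
  set K : ℝ := ((a + 1) / 1) ^ a
  refine ⟨2 * K * (π ^ a)⁻¹ * exp (1 / (4 * ε)), by positivity, fun u hu => ?_⟩
  rcases le_total u ε with huε | huε
  · have := fourierGaussian_nonneg n hu.le 1
    calc expSecondDiff 2 D u ≤ 0 := by simpa using hneg u hu huε
      _ ≤ _ := by positivity
  · have hpow : u ^ a ≤ K * exp (1 * u) := rpow_le_mul_exp_mul (by positivity) one_pos hu.le
    have hgauss : (π / u) ^ a * exp (-(1 / (4 * ε))) ≤ fourierGaussian n u 1 := by
      rw [fourierGaussian, one_pow]; gcongr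
    calc expSecondDiff 2 D u ≤ 2 * exp (-u) := expSecondDiff_le hu.le (by linarith)
      _ ≤ 2 * exp (-u) * (K * exp (1 * u) / u ^ a) := le_mul_of_one_le_right (by positivity)
          ((one_le_div (by positivity)).2 hpow)
      _ = 2 * K * (π ^ a)⁻¹ * exp (1 / (4 * ε)) * ((π / u) ^ a * exp (-(1 / (4 * ε)))) := by
          rw [div_rpow pi_pos.le hu.le, one_mul, exp_neg, exp_neg]; field_simp
      _ ≤ _ := by gcongr

lemma exists_three_lt_rpow_lt {β : ℝ} (hβ : 0 < β) (hβ1 : β < 1) :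
    ∃ D > (3 : ℝ), D ^ β < 2 * 2 ^ β - 1 := by
  have hconcave : (3 : ℝ) ^ β < 2 * 2 ^ β - 1 := by
    have hmid := (strictConcaveOn_rpow hβ hβ1).2 (Set.mem_Ici.2 zero_le_one)
      (Set.mem_Ici.2 (zero_le_three (α := ℝ))) (by norm_num) one_half_pos one_half_pos
      (by norm_num)
    norm_num at hmid
    linarith
  have hcont : Tendsto (fun D : ℝ => D ^ β) (𝓝[>] 3) (𝓝 (3 ^ β)) :=
    (continuousAt_rpow_const 3 β (by norm_num)).tendsto.mono_left nhdsWithin_le_nhds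
  obtain ⟨D, hDβ, hD⟩ := ((hcont.eventually_lt_const hconcave).and self_mem_nhdsWithin).exists
  exact ⟨D, hD, hDβ⟩

end ExponentialBounds

lemma exists_integral_fourierGaussian_le (n : ℕ) :
    ∃ C > 0, ∀ (μ : Measure ℝ≥0) [IsProbabilityMeasure μ], (∀ᵐ s ∂μ, 0 < s) → ∀ r > 0,
      ∫ s : ℝ≥0, fourierGaussian n s r ∂μ ≤
        C * (r ^ (-(n : ℝ)) * (1 - laplaceTransform μ (r ^ 2)⁻¹)) := by
  obtain ⟨C, hC, hle⟩ := exists_fourierGaussian_le_mul_one_sub_exp_neg n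
  refine ⟨C, hC, fun μ _ hpos r hr => ?_⟩
  have hl : 0 ≤ (r ^ 2)⁻¹ := by positivity
  rw [one_sub_laplaceTransform μ hl, ← integral_const_mul, ← integral_const_mul]
  refine integral_mono_of_nonneg (.of_forall fun s => fourierGaussian_nonneg n s.coe_nonneg r)
    ((((integrable_const 1).sub (integrable_exp_neg_mul_coe μ hl)).const_mul _).const_mul _) ?_
  filter_upwards [hpos] with s hs
  calc fourierGaussian n s r = r ^ (-(n : ℝ)) * fourierGaussian n ((r ^ 2)⁻¹ * s) 1 := by
        rw [fourierGaussian_eq_rpow_mul n s.coe_nonneg hr, div_eq_inv_mul]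
    _ ≤ r ^ (-(n : ℝ)) * (C * (1 - exp (-((r ^ 2)⁻¹ * s)))) := by
        gcongr; exact hle _ (by positivity)
    _ = _ := by ring

lemma integrable_expSecondDiff (μ : Measure ℝ≥0) [IsFiniteMeasure μ] {b c l : ℝ} (hb : 0 ≤ b)
    (hc : 0 ≤ c) (hl : 0 ≤ l) : Integrable (fun s : ℝ≥0 => expSecondDiff b c (l * s)) μ := by
  simp only [expSecondDiff, ← mul_assoc]
  exact ((integrable_exp_neg_mul_coe μ hl).sub
    ((integrable_exp_neg_mul_coe μ (mul_nonneg hb hl)).const_mul 2)).add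
    (integrable_exp_neg_mul_coe μ (mul_nonneg hc hl))

lemma integral_expSecondDiff (μ : Measure ℝ≥0) [IsFiniteMeasure μ] {b c l : ℝ} (hb : 0 ≤ b)
    (hc : 0 ≤ c) (hl : 0 ≤ l) :
    ∫ s : ℝ≥0, expSecondDiff b c (l * s) ∂μ =
      laplaceTransform μ l - 2 * laplaceTransform μ (b * l) + laplaceTransform μ (c * l) := by
  have hone := integrable_exp_neg_mul_coe μ hl
  have hb' := (integrable_exp_neg_mul_coe μ (mul_nonneg hb hl)).const_mul 2
  have hc' := integrable_exp_neg_mul_coe μ (mul_nonneg hc hl)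
  simp only [expSecondDiff, laplaceTransform, ← mul_assoc]
  rw [integral_add (f := fun s : ℝ≥0 => exp (-(l * s)) - 2 * exp (-(b * l * s)))
    (hone.sub hb') hc', integral_sub hone hb', integral_const_mul]

lemma exists_le_mul_integral_fourierGaussian (n : ℕ) {D : ℝ} (hD : 3 < D) :
    ∃ C > 0, ∀ (μ : Measure ℝ≥0) [IsFiniteMeasure μ], (∀ᵐ s ∂μ, 0 < s) → ∀ q r : ℝ, 0 ≤ q →
      q ≤ r → 0 < r → Integrable (fun s : ℝ≥0 => fourierGaussian n s q) μ →
      r ^ (-(n : ℝ)) * (laplaceTransform μ (r ^ 2)⁻¹ - 2 * laplaceTransform μ (2 * (r ^ 2)⁻¹) +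
        laplaceTransform μ (D * (r ^ 2)⁻¹)) ≤ C * ∫ s : ℝ≥0, fourierGaussian n s q ∂μ := by
  obtain ⟨C, hC, hle⟩ := exists_expSecondDiff_le_mul_fourierGaussian n hD
  refine ⟨C, hC, fun μ _ hpos q r hq hqr hr hint => ?_⟩
  have hD0 : 0 ≤ D := by linarith
  have hl : 0 ≤ (r ^ 2)⁻¹ := by positivity
  rw [← integral_expSecondDiff μ zero_le_two hD0 hl, ← integral_const_mul, ← integral_const_mul]
  refine integral_mono_ae ((integrable_expSecondDiff μ zero_le_two hD0 hl).const_mul _)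
    (hint.const_mul C) ?_
  filter_upwards [hpos] with s hs
  calc r ^ (-(n : ℝ)) * expSecondDiff 2 D ((r ^ 2)⁻¹ * s)
      ≤ r ^ (-(n : ℝ)) * (C * fourierGaussian n ((r ^ 2)⁻¹ * s) 1) := by
        gcongr; exact hle _ (by positivity)
    _ = C * fourierGaussian n s r := by
        rw [fourierGaussian_eq_rpow_mul n s.coe_nonneg hr, div_eq_inv_mul]; ring
    _ ≤ C * fourierGaussian n s q := by
        gcongr; exact fourierGaussian_anti n s.coe_nonneg hq hqr

/-! ### The Fourier transform of the stable symbol -/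

section StableFourier

variable {V : Type*} [NormedAddCommGroup V] [InnerProductSpace ℝ V] [FiniteDimensional ℝ V]
  [MeasurableSpace V] [BorelSpace V]

/-- The Fourier transform of `z ↦ e^{-τ|z|^α}`, without the factor `(2π)^{-n}` of the heat kernel;
the function is even, so only the cosine part remains. -/
noncomputable def stableFourier (α τ : ℝ) (x : V) : ℝ :=
  ∫ z, cos ⟪x, z⟫ * exp (-(τ * ‖z‖ ^ α))

lemma integrable_exp_neg_mul_norm_rpow {α τ : ℝ} (hα : 0 < α) (hτ : 0 < τ) :
    Integrable fun z : V => exp (-(τ * ‖z‖ ^ α)) := by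
  rcases subsingleton_or_nontrivial V with hV | hV
  · exact .of_subsingleton
  rw [integrable_fun_norm_addHaar volume (f := fun y : ℝ => exp (-(τ * y ^ α)))]
  have hint := integrableOn_rpow_mul_exp_neg_mul_rpow (p := α) (s := (finrank ℝ V - 1 : ℕ)) (b := τ)
    (neg_one_lt_zero.trans_le (Nat.cast_nonneg _)) hα hτ
  simpa only [rpow_natCast, neg_mul, smul_eq_mul] using hint

lemma exists_stableFourier_eq_integral_fourierGaussian {α τ : ℝ} (hα : 0 < α) (hα2 : α < 2)
    (hτ : 0 < τ) :
    ∃ μ : ProbabilityMeasure ℝ≥0, (∀ᵐ s ∂(μ : Measure ℝ≥0), 0 < s) ∧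
      (∀ l ≥ 0, laplaceTransform μ l = exp (-(τ * l ^ (α / 2)))) ∧ ∀ x : V,
        Integrable (fun s : ℝ≥0 => fourierGaussian (finrank ℝ V) s ‖x‖) μ ∧
        stableFourier α τ x = ∫ s : ℝ≥0, fourierGaussian (finrank ℝ V) s ‖x‖ ∂μ := by
  obtain ⟨μ, hμ⟩ := exists_laplaceTransform_eq_exp_neg_rpow (β := α / 2) (by linarith)
    (by linarith) hτ
  have hpos : ∀ᵐ s ∂(μ : Measure ℝ≥0), 0 < s := by
    refine ae_pos_of_tendsto_laplaceTransform
      (Tendsto.congr' ((eventually_ge_atTop 0).mono fun l hl => (hμ l hl).symm) ?_)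
    exact tendsto_exp_neg_atTop_nhds_zero.comp
      ((tendsto_rpow_atTop (by linarith)).const_mul_atTop hτ)
  have hnorm (z : V) : laplaceTransform μ (‖z‖ ^ 2) = exp (-(τ * ‖z‖ ^ α)) := by
    rw [hμ _ (sq_nonneg _), ← rpow_natCast_mul (norm_nonneg z)]
    congr 4; push_cast; ring
  have hint : Integrable fun z : V => laplaceTransform μ (‖z‖ ^ 2) := by
    simpa only [hnorm] using integrable_exp_neg_mul_norm_rpow hα hτ
  refine ⟨μ, hpos, hμ, fun x => ⟨integrable_fourierGaussian hpos hint x, ?_⟩⟩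
  rw [← integral_cos_inner_mul_laplaceTransform hpos hint x]
  simp only [stableFourier, hnorm]

lemma stableFourier_le_integral {α τ : ℝ} (hα : 0 < α) (hτ : 0 < τ) (x : V) :
    stableFourier α τ x ≤ ∫ z : V, exp (-(τ * ‖z‖ ^ α)) := by
  have hnorm : ‖stableFourier α τ x‖ ≤ ∫ z : V, exp (-(τ * ‖z‖ ^ α)) := by
    refine norm_integral_le_of_norm_le (integrable_exp_neg_mul_norm_rpow hα hτ)
      (.of_forall fun z => ?_)
    rw [norm_mul, norm_of_nonneg (exp_pos _).le]
    exact mul_le_of_le_one_left (exp_pos _).le (abs_cos_le_one _)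
  exact (le_abs_self _).trans hnorm

lemma inv_sq_rpow_half {r : ℝ} (hr : 0 ≤ r) (α : ℝ) : (r ^ 2)⁻¹ ^ (α / 2) = r ^ (-α) := by
  rw [inv_rpow (sq_nonneg r), ← rpow_natCast_mul hr, rpow_neg hr]
  congr 2; push_cast; ring

lemma exists_stableFourier_le_mul_norm_rpow {α τ : ℝ} (hα : 0 < α) (hα2 : α < 2) (hτ : 0 < τ) :
    ∃ C > 0, ∀ x : V, x ≠ 0 → stableFourier α τ x ≤ C * ‖x‖ ^ (-(finrank ℝ V + α)) := by
  obtain ⟨μ, hpos, hμ, hsub⟩ :=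
    exists_stableFourier_eq_integral_fourierGaussian (V := V) hα hα2 hτ
  obtain ⟨C, hC, hle⟩ := exists_integral_fourierGaussian_le (finrank ℝ V)
  refine ⟨C * τ, by positivity, fun x hx => ?_⟩
  have hr : 0 < ‖x‖ := norm_pos_iff.2 hx
  calc stableFourier α τ x = ∫ s : ℝ≥0, fourierGaussian (finrank ℝ V) s ‖x‖ ∂μ := (hsub x).2
    _ ≤ C * (‖x‖ ^ (-(finrank ℝ V : ℝ)) * (1 - exp (-(τ * ‖x‖ ^ (-α))))) := by
        rw [← inv_sq_rpow_half hr.le α, ← hμ _ (by positivity)]; exact hle μ hpos ‖x‖ hr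
    _ ≤ C * (‖x‖ ^ (-(finrank ℝ V : ℝ)) * (τ * ‖x‖ ^ (-α))) := by
        gcongr; linarith [one_sub_le_exp_neg (τ * ‖x‖ ^ (-α))]
    _ = C * τ * ‖x‖ ^ (-(finrank ℝ V + α)) := by
        rw [neg_add, rpow_add hr]; ring

lemma exists_stableFourier_le {α τ : ℝ} (hα : 0 < α) (hα2 : α < 2) (hτ : 0 < τ) :
    ∃ C > 0, ∀ x : V, stableFourier α τ x ≤ C * max 1 ‖x‖ ^ (-(finrank ℝ V + α)) := by
  obtain ⟨C, hC, hle⟩ := exists_stableFourier_le_mul_norm_rpow (V := V) hα hα2 hτ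
  refine ⟨max C (∫ z : V, exp (-(τ * ‖z‖ ^ α))), lt_max_of_lt_left hC, fun x => ?_⟩
  rcases le_or_gt 1 ‖x‖ with hx | hx
  · rw [max_eq_right hx]
    exact (hle x (norm_pos_iff.1 (one_pos.trans_le hx))).trans (by gcongr; exact le_max_left _ _)
  · rw [max_eq_left hx.le, one_rpow, mul_one]
    exact (stableFourier_le_integral hα hτ x).trans (le_max_right _ _)

lemma exists_eventually_mul_rpow_le_stableFourier {α τ : ℝ} (hα : 0 < α) (hα2 : α < 2)
    (hτ : 0 < τ) :
    ∃ c > 0, ∀ᶠ R : ℝ in atTop, ∀ x : V, ‖x‖ ≤ R →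
      c * R ^ (-(finrank ℝ V + α)) ≤ stableFourier α τ x := by
  obtain ⟨μ, hpos, hμ, hsub⟩ :=
    exists_stableFourier_eq_integral_fourierGaussian (V := V) hα hα2 hτ
  obtain ⟨D, hD, hDα⟩ := exists_three_lt_rpow_lt (half_pos hα) (by linarith : α / 2 < 1)
  obtain ⟨C, hC, hle⟩ := exists_le_mul_integral_fourierGaussian (finrank ℝ V) hD
  obtain ⟨m, hm, hmD⟩ := exists_between (sub_pos.2 hDα)
  obtain ⟨ε, hε, hdiff⟩ := exists_forall_mul_le_of_hasDerivAt_zero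
    (hasDerivAt_expSecondDiff_zero _ _) (expSecondDiff_zero _ _) hmD
  have hsmall : ∀ᶠ R : ℝ in atTop, τ * R ^ (-α) < ε := by
    have hlim := (tendsto_rpow_neg_atTop hα).const_mul τ
    rw [mul_zero] at hlim
    exact hlim.eventually_lt_const hε
  refine ⟨C⁻¹ * m * τ, by positivity, ?_⟩
  filter_upwards [hsmall, eventually_gt_atTop 0] with R hRε hR x hxR
  have hone : laplaceTransform μ (R ^ 2)⁻¹ = exp (-(τ * R ^ (-α))) := by
    rw [hμ _ (by positivity), inv_sq_rpow_half hR.le]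
  have hmul {k : ℝ} (hk : 0 ≤ k) : laplaceTransform μ (k * (R ^ 2)⁻¹) =
      exp (-(k ^ (α / 2) * (τ * R ^ (-α)))) := by
    rw [hμ _ (by positivity), mul_rpow hk (by positivity), inv_sq_rpow_half hR.le, mul_left_comm]
  have hbound := hle μ hpos ‖x‖ R (norm_nonneg x) hxR hR (hsub x).1
  rw [hone, hmul zero_le_two, hmul (by linarith), ← (hsub x).2] at hbound
  calc C⁻¹ * m * τ * R ^ (-(finrank ℝ V + α))
      = C⁻¹ * (R ^ (-(finrank ℝ V : ℝ)) * (m * (τ * R ^ (-α)))) := by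
        rw [neg_add, rpow_add hR]; ring
    _ ≤ C⁻¹ * (R ^ (-(finrank ℝ V : ℝ)) *
          expSecondDiff (2 ^ (α / 2)) (D ^ (α / 2)) (τ * R ^ (-α))) := by
        gcongr; exact hdiff _ (by positivity) hRε.le
    _ ≤ stableFourier α τ x := (inv_mul_le_iff₀ hC).2 hbound

lemma exists_le_stableFourier {α τ : ℝ} (hα : 0 < α) (hα2 : α < 2) (hτ : 0 < τ) :
    ∃ c > 0, ∀ x : V, c * max 1 ‖x‖ ^ (-(finrank ℝ V + α)) ≤ stableFourier α τ x := by
  obtain ⟨c, hc, hev⟩ := exists_eventually_mul_rpow_le_stableFourier (V := V) hα hα2 hτ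
  obtain ⟨R, hR⟩ := eventually_atTop.1 hev
  set R₁ := max 1 R
  have hR₁ : 0 < R₁ := lt_max_of_lt_left one_pos
  refine ⟨c * R₁ ^ (-(finrank ℝ V + α)), by positivity, fun x => ?_⟩
  have hm : 1 ≤ max 1 ‖x‖ := le_max_left _ _
  have hRle : R ≤ R₁ * max 1 ‖x‖ := (le_max_right 1 R).trans (le_mul_of_one_le_right hR₁.le hm)
  have hxle : ‖x‖ ≤ R₁ * max 1 ‖x‖ :=
    (le_max_right 1 _).trans (le_mul_of_one_le_left (by positivity) (le_max_left 1 R))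
  rw [mul_assoc, ← mul_rpow hR₁.le (by positivity)]
  exact hR _ hRle x hxle

lemma stableFourier_mul (τ : ℝ) {α t : ℝ} (hα : α ≠ 0) (ht : 0 < t) (x : V) :
    stableFourier α (t * τ) x =
      t ^ (-(finrank ℝ V : ℝ) / α) * stableFourier α τ (t ^ (-(1 / α)) • x) := by
  have hscale := Measure.integral_comp_smul_of_nonneg (volume : Measure V)
    (fun z : V => cos ⟪t ^ (-(1 / α)) • x, z⟫ * exp (-(τ * ‖z‖ ^ α))) (t ^ (1 / α))
    (hR := by positivity)
  have hjac : ((t ^ (1 / α)) ^ finrank ℝ V)⁻¹ = t ^ (-(finrank ℝ V : ℝ) / α) := by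
    rw [← rpow_mul_natCast ht.le, ← rpow_neg ht.le]; congr 1; ring
  rw [hjac, smul_eq_mul] at hscale
  rw [stableFourier, stableFourier, ← hscale]
  congr 1 with z
  rw [real_inner_smul_left, real_inner_smul_right, ← mul_assoc, ← rpow_add ht, neg_add_cancel,
    rpow_zero, one_mul, norm_smul, norm_of_nonneg (by positivity),
    mul_rpow (by positivity) (norm_nonneg z), one_div, rpow_inv_rpow ht.le hα]
  ring_nf

end StableFourier

/-! ### The heat kernel -/

lemma rpow_mul_max_one_rpow_mul {α t : ℝ} (hα : α ≠ 0) (ht : 0 < t) (n r : ℝ) :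
    t ^ (-n / α) * max 1 (t ^ (-(1 / α)) * r) ^ (-(n + α)) =
      t * max (t ^ (1 / α)) r ^ (-(n + α)) := by
  have hmax : max 1 (t ^ (-(1 / α)) * r) = t ^ (-(1 / α)) * max (t ^ (1 / α)) r := by
    rw [mul_max_of_nonneg _ _ (by positivity), ← rpow_add ht, neg_add_cancel, rpow_zero]
  have hexp : t ^ (-n / α) * (t ^ (-(1 / α))) ^ (-(n + α)) = t := by
    rw [← rpow_mul ht.le, ← rpow_add ht]
    convert rpow_one t using 2
    field_simp
    ring
  rw [hmax, mul_rpow (by positivity) (by positivity), ← mul_assoc, hexp]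

lemma stableKernel_eq_mul_stableFourier (d : ℕ) {ν α t : ℝ} (hα : 0 < α) (htν : 0 < t * ν)
    (x : EuclideanSpace ℝ (Fin d)) :
    stableKernel d ν α t x = ((2 * π) ^ d)⁻¹ * stableFourier α (t * ν) x := by
  have hint : Integrable fun z : EuclideanSpace ℝ (Fin d) =>
      Complex.exp (-(Complex.I * (⟪x, z⟫ : ℝ))) * Complex.exp (-((t * ν * ‖z‖ ^ α : ℝ) : ℂ)) := by
    refine (integrable_exp_neg_mul_norm_rpow hα htν).mono'
      (Measurable.aestronglyMeasurable (by fun_prop)) (.of_forall fun z => ?_)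
    simp [Complex.norm_exp]
  have hre (z : EuclideanSpace ℝ (Fin d)) :
      (Complex.exp (-(Complex.I * (⟪x, z⟫ : ℝ))) *
        Complex.exp (-((t * ν * ‖z‖ ^ α : ℝ) : ℂ))).re =
      cos ⟪x, z⟫ * exp (-(t * ν * ‖z‖ ^ α)) := by
    rw [← Complex.ofReal_neg, ← Complex.ofReal_exp, Complex.re_mul_ofReal, Complex.exp_re]
    simp
  rw [stableKernel, stableFourier]
  simp_rw [← hre]
  exact congrArg _ (integral_re hint).symm

theorem exists_le_stableKernel_le (d : ℕ) {ν α : ℝ} (hν : 0 < ν) (hα : 0 < α) (hα2 : α < 2) :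
    ∃ c₁ > 0, ∃ c₂ > 0, ∀ (x : EuclideanSpace ℝ (Fin d)) (t : ℝ), 0 < t →
      c₁ * (t * max (t ^ (1 / α)) ‖x‖ ^ (-(d + α))) ≤ stableKernel d ν α t x ∧
        stableKernel d ν α t x ≤ c₂ * (t * max (t ^ (1 / α)) ‖x‖ ^ (-(d + α))) := by
  obtain ⟨c, hc, hlower⟩ := exists_le_stableFourier (V := EuclideanSpace ℝ (Fin d)) hα hα2 hν
  obtain ⟨C, hC, hupper⟩ := exists_stableFourier_le (V := EuclideanSpace ℝ (Fin d)) hα hα2 hν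
  simp only [finrank_euclideanSpace_fin] at hlower hupper
  refine ⟨((2 * π) ^ d)⁻¹ * c, by positivity, ((2 * π) ^ d)⁻¹ * C, by positivity, fun x t ht => ?_⟩
  have hnorm : ‖t ^ (-(1 / α)) • x‖ = t ^ (-(1 / α)) * ‖x‖ := by
    rw [norm_smul, norm_of_nonneg (by positivity)]
  rw [stableKernel_eq_mul_stableFourier d hα (by positivity), stableFourier_mul ν hα.ne' ht,
    finrank_euclideanSpace_fin, ← rpow_mul_max_one_rpow_mul hα.ne' ht, ← hnorm, mul_assoc,
    mul_assoc, mul_left_comm c, mul_left_comm C]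
  exact ⟨by gcongr; exact hlower _, by gcongr; exact hupper _⟩

lemma ofReal_mul_rpow_inf_div_ofReal (t : ℝ) {a b p : ℝ} (ha : 0 < a) (hb : 0 ≤ b) (hp : 0 ≤ p) :
    ENNReal.ofReal (t * a ^ (-p)) ⊓ ENNReal.ofReal t / ENNReal.ofReal (b ^ p) =
      ENNReal.ofReal (t * max a b ^ (-p)) := by
  have hdiv {y : ℝ} (hy : 0 < y) :
      ENNReal.ofReal (t * y ^ (-p)) = ENNReal.ofReal t / ENNReal.ofReal (y ^ p) := by
    rw [rpow_neg hy.le, ← div_eq_mul_inv, ENNReal.ofReal_div_of_pos (by positivity)]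
  rw [hdiv ha, hdiv (lt_max_of_lt_left ha)]
  rcases le_total a b with hab | hab
  · rw [max_eq_right hab]
    exact inf_eq_right.2 (by gcongr)
  · rw [max_eq_left hab]
    exact inf_eq_left.2 (by gcongr)

/-- Two-sided heat kernel estimates for `0 < α < 2`:
`c₁ (t^{-d/α} ∧ t/|x|^{d+α}) ≤ p_t(x) ≤ c₂ (t^{-d/α} ∧ t/|x|^{d+α})`.
(Stated in `ℝ≥0∞` so that the convention `t/0 = ∞` at `x = 0` is the correct one.) -/
theorem stableKernel_two_sided_bounds (d : ℕ) (hd : 1 ≤ d) (ν α : ℝ) (hν : 0 < ν)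
    (hα : 0 < α) (hα2 : α < 2) :
    ∃ c₁ > (0 : ℝ), ∃ c₂ > (0 : ℝ), ∀ (x : EuclideanSpace ℝ (Fin d)) (t : ℝ), 0 < t →
      ENNReal.ofReal c₁ *
          ((ENNReal.ofReal (t ^ (-(d : ℝ) / α))) ⊓
            (ENNReal.ofReal t / ENNReal.ofReal (‖x‖ ^ ((d : ℝ) + α))))
        ≤ ENNReal.ofReal (stableKernel d ν α t x) ∧
      ENNReal.ofReal (stableKernel d ν α t x)
        ≤ ENNReal.ofReal c₂ *
          ((ENNReal.ofReal (t ^ (-(d : ℝ) / α))) ⊓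
            (ENNReal.ofReal t / ENNReal.ofReal (‖x‖ ^ ((d : ℝ) + α)))) := by
  obtain ⟨c₁, hc₁, c₂, hc₂, hbound⟩ := exists_le_stableKernel_le d hν hα hα2
  refine ⟨c₁, hc₁, c₂, hc₂, fun x t ht => ?_⟩
  have hdiag : t ^ (-(d : ℝ) / α) = t * (t ^ (1 / α)) ^ (-((d : ℝ) + α)) := by
    have hexp : -(d : ℝ) / α = 1 + 1 / α * -((d : ℝ) + α) := by field_simp; ring
    rw [hexp, rpow_add ht, rpow_one, rpow_mul ht.le]
  rw [hdiag, ofReal_mul_rpow_inf_div_ofReal t (by positivity) (norm_nonneg x) (by positivity),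
    ← ENNReal.ofReal_mul hc₁.le, ← ENNReal.ofReal_mul hc₂.le]
  exact (hbound x t ht).imp ENNReal.ofReal_le_ofReal ENNReal.ofReal_le_ofReal
end

section
/- Suppose 0 < β < min(α, d). Then there exists a positive constant c₂ such that for all t > 0, x ∈ ℝ^d and R > 0: ∫_{B(x,R)^c × B(x,R)} p_t(x−y) p_t(x−w) |y−w|^{−β} dy dw ≤ c₂ t^{1−β/α} / R^{α}. -/
open MeasureTheory Real
open scoped RealInnerProductSpace

/-!
Let `p_t` be the stable kernel and `φ_t(z) = exp(-tν‖z‖^α)` its characteristic function.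

* Positivity. Subordination: `u ^ (α / 2)` is a Bernstein function, so `exp(-κ u ^ (α / 2))` is a
  limit of multiples of `(1 + g(u) / n) ^ n` with `g` the Laplace transform of a finite measure.
  At `u = ‖z‖ ^ 2` each Laplace transform is a mixture of Gaussians, whose Fourier transform is
  positive. A Gaussian cut-off makes all the Fourier integrals absolutely convergent.
* Mass and tail. By Fubini, `∫ p_t exp(-‖x‖ ^ 2 / R ^ 2) dx = ∫ φ_t(z) R ^ d G(R z) dz` for a
  Gaussian probability density `G`. Letting `R → ∞` gives `∫ p_t ≤ 1`, and subtracting from `1`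
  together with `1 - φ_t(z) ≤ tν‖z‖ ^ α` gives `∫_{‖x‖ ≥ R} p_t ≤ C t / R ^ α`.
* Potential. With `r = t ^ (1 / α)` and an integrable `K`, `‖v‖ ^ (-β) ≤ r ^ (-β) (1 + K(v / r))`.
  Using `∫ p_t ≤ 1` for the first term and `p_t ≤ C r ^ (-d)` for the second gives
  `∫ p_t(x - w) ‖y - w‖ ^ (-β) dw ≤ C t ^ (-β / α)` uniformly in `y`. Integrating this against the
  tail of `p_t(x - y)` gives the theorem.
-/

open Filter Topology Module
open scoped NNReal

section CosTransform

variable {V : Type*} [NormedAddCommGroup V] [InnerProductSpace ℝ V] [FiniteDimensional ℝ V]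
  [MeasurableSpace V] [BorelSpace V]

/-- The inverse Fourier transform `x ↦ (2π)^{-n} ∫ e^{-i x·z} φ(z) dz` on an `n`-dimensional space,
written with a cosine because it is only used for even real functions `φ`. If `φ` is an integrable
characteristic function, this is the corresponding probability density. -/
noncomputable def cosTransform (φ : V → ℝ) (x : V) : ℝ :=
  ((2 * π) ^ finrank ℝ V)⁻¹ * ∫ z, cos ⟪x, z⟫ * φ z

theorem norm_cos_mul_le (x a : ℝ) : ‖cos x * a‖ ≤ ‖a‖ := by
  rw [norm_mul]
  exact mul_le_of_le_one_left (norm_nonneg _) (abs_cos_le_one x)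

theorem integrable_cos_inner_mul {φ : V → ℝ} (hφ : Integrable φ) (x : V) :
    Integrable fun z => cos ⟪x, z⟫ * φ z :=
  hφ.mono (Continuous.aestronglyMeasurable (by fun_prop) |>.mul hφ.1)
    (.of_forall fun z => norm_cos_mul_le _ _)

theorem cosTransform_const_mul (c : ℝ) (φ : V → ℝ) (x : V) :
    cosTransform (fun z => c * φ z) x = c * cosTransform φ x := by
  simp only [cosTransform, mul_left_comm _ c, integral_const_mul]

theorem cosTransform_comp_smul {c : ℝ} (hc : 0 < c) (φ : V → ℝ) (x : V) :
    cosTransform (fun z => φ (c • z)) x =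
      (c ^ finrank ℝ V)⁻¹ * cosTransform φ (c⁻¹ • x) := by
  have h := Measure.integral_comp_smul_of_nonneg volume
    (fun z : V => cos ⟪c⁻¹ • x, z⟫ * φ z) c (hR := hc.le)
  simp only [inner_smul_left, inner_smul_right, RCLike.conj_to_real,
    mul_inv_cancel_left₀ hc.ne', smul_eq_mul] at h
  rw [cosTransform, h, cosTransform, mul_left_comm]
  simp only [inner_smul_left, RCLike.conj_to_real]

theorem abs_cosTransform_le {φ : V → ℝ} (hφ : Integrable φ) (x : V) :
    |cosTransform φ x| ≤ cosTransform (fun z => |φ z|) 0 := by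
  rw [cosTransform, abs_mul, abs_of_pos (by positivity), cosTransform]
  gcongr
  simpa using norm_integral_le_of_norm_le hφ.norm (.of_forall fun z => norm_cos_mul_le ⟪x, z⟫ _)

theorem continuous_cosTransform {φ : V → ℝ} (hφ : Integrable φ) :
    Continuous (cosTransform φ) := by
  have hcont : Continuous fun x : V => ∫ z, cos ⟪x, z⟫ * φ z :=
    continuous_of_dominated (fun x => (integrable_cos_inner_mul hφ x).1)
      (fun x => .of_forall fun z => norm_cos_mul_le _ _) hφ.norm (.of_forall fun z => by fun_prop)
  exact continuous_const.mul hcont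

theorem tendsto_cosTransform {φ : ℕ → V → ℝ} {ψ bound : V → ℝ}
    (hφ : ∀ n, AEStronglyMeasurable (φ n)) (hbound : Integrable bound)
    (hle : ∀ n z, ‖φ n z‖ ≤ bound z) (hlim : ∀ z, Tendsto (φ · z) atTop (𝓝 (ψ z))) (x : V) :
    Tendsto (fun n => cosTransform (φ n) x) atTop (𝓝 (cosTransform ψ x)) := by
  have hint : Tendsto (fun n => ∫ z, cos ⟪x, z⟫ * φ n z) atTop (𝓝 (∫ z, cos ⟪x, z⟫ * ψ z)) :=
    tendsto_integral_of_dominated_convergence bound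
      (fun n => (Continuous.aestronglyMeasurable (by fun_prop)).mul (hφ n)) hbound
      (fun n => .of_forall fun z => (norm_cos_mul_le _ _).trans (hle n z))
      (.of_forall fun z => (hlim z).const_mul _)
  exact hint.const_mul _

theorem integrable_cosTransform_mul {φ ψ : V → ℝ} (hφ : Integrable φ) (hψ : Integrable ψ) :
    Integrable fun x => cosTransform φ x * ψ x :=
  hψ.bdd_mul (continuous_cosTransform hφ).aestronglyMeasurable
    (.of_forall (abs_cosTransform_le hφ))

theorem integral_cosTransform_mul {φ ψ : V → ℝ} (hφ : Integrable φ) (hψ : Integrable ψ) :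
    ∫ x, cosTransform φ x * ψ x = ∫ z, φ z * cosTransform ψ z := by
  have hint : Integrable (fun q : V × V => cos ⟪q.1, q.2⟫ * (ψ q.1 * φ q.2))
      (volume.prod volume) :=
    (hψ.mul_prod hφ).mono
      (Continuous.aestronglyMeasurable (by fun_prop) |>.mul (hψ.mul_prod hφ).1)
      (.of_forall fun q => norm_cos_mul_le _ _)
  calc ∫ x, cosTransform φ x * ψ x
      = ((2 * π) ^ finrank ℝ V)⁻¹ * ∫ x, ∫ z, cos ⟪x, z⟫ * (ψ x * φ z) := by
        rw [← integral_const_mul]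
        refine integral_congr_ae (.of_forall fun x => ?_)
        simp only [cosTransform, mul_left_comm _ (ψ x), integral_const_mul]
        ring
    _ = ((2 * π) ^ finrank ℝ V)⁻¹ * ∫ z, ∫ x, cos ⟪x, z⟫ * (ψ x * φ z) := by
        rw [integral_integral_swap hint]
    _ = ∫ z, φ z * cosTransform ψ z := by
        rw [← integral_const_mul]
        refine integral_congr_ae (.of_forall fun z => ?_)
        simp only [cosTransform, ← mul_assoc, integral_mul_const, real_inner_comm]
        ring

end CosTransform

section Gaussian

variable {V : Type*} [NormedAddCommGroup V] {b : ℝ}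

theorem exp_neg_mul_sq_norm_le_one (hb : 0 ≤ b) (z : V) : rexp (-b * ‖z‖ ^ 2) ≤ 1 := by
  rw [exp_le_one_iff, neg_mul, neg_nonpos]
  positivity

theorem tendsto_exp_neg_one_div_mul_sq_norm (z : V) :
    Tendsto (fun n : ℕ => rexp (-(1 / ((n : ℝ) + 1)) * ‖z‖ ^ 2)) atTop (𝓝 1) := by
  simpa using (tendsto_one_div_add_atTop_nhds_zero_nat.neg.mul_const (‖z‖ ^ 2)).rexp

variable [InnerProductSpace ℝ V] [FiniteDimensional ℝ V] [MeasurableSpace V] [BorelSpace V]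

theorem integrable_exp_neg_mul_sq_norm (hb : 0 < b) :
    Integrable fun z : V => rexp (-b * ‖z‖ ^ 2) :=
  .of_integral_ne_zero <| by
    rw [GaussianFourier.integral_rexp_neg_mul_sq_norm hb]
    positivity

theorem cosTransform_exp_neg_mul_sq_norm (hb : 0 < b) (x : V) :
    cosTransform (fun z : V => rexp (-b * ‖z‖ ^ 2)) x =
      ((2 * π) ^ finrank ℝ V)⁻¹ * (π / b) ^ (finrank ℝ V / 2 : ℝ) *
        rexp (-(4 * b)⁻¹ * ‖x‖ ^ 2) := by
  have hb' : 0 < (b : ℂ).re := hb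
  have hre : ∀ z : V, cos ⟪x, z⟫ * rexp (-b * ‖z‖ ^ 2) =
      (Complex.exp (-b * ‖z‖ ^ 2 + Complex.I * (⟪x, z⟫ : ℝ))).re := fun z => by
    rw [Complex.exp_re]
    simp [← Complex.ofReal_pow, mul_comm]
  have hint := GaussianFourier.integrable_cexp_neg_mul_sq_norm_add hb' Complex.I x
  have hval : (π / b : ℂ) ^ (finrank ℝ V / 2 : ℂ) * Complex.exp (Complex.I ^ 2 * ‖x‖ ^ 2 / (4 * b))
      = ((π / b) ^ (finrank ℝ V / 2 : ℝ) * rexp (-(4 * b)⁻¹ * ‖x‖ ^ 2) : ℝ) := by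
    rw [Complex.ofReal_mul, Complex.ofReal_cpow (by positivity), Complex.I_sq]
    push_cast
    ring_nf
  simp only [cosTransform, hre, mul_assoc]
  congr 1
  have hintegral_re := integral_re hint
  simp only [RCLike.re_to_complex] at hintegral_re
  rw [hintegral_re, GaussianFourier.integral_cexp_neg_mul_sq_norm_add hb', hval, Complex.ofReal_re]

theorem cosTransform_exp_neg_mul_sq_norm_nonneg (hb : 0 < b) (x : V) :
    0 ≤ cosTransform (fun z : V => rexp (-b * ‖z‖ ^ 2)) x := by
  rw [cosTransform_exp_neg_mul_sq_norm hb]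
  positivity

theorem integrable_cosTransform_exp_neg_mul_sq_norm (hb : 0 < b) :
    Integrable (cosTransform fun z : V => rexp (-b * ‖z‖ ^ 2)) := by
  simp only [funext (cosTransform_exp_neg_mul_sq_norm (V := V) hb)]
  exact (integrable_exp_neg_mul_sq_norm (by positivity)).const_mul _

theorem integral_cosTransform_exp_neg_mul_sq_norm (hb : 0 < b) :
    ∫ x, cosTransform (fun z : V => rexp (-b * ‖z‖ ^ 2)) x = 1 := by
  simp only [cosTransform_exp_neg_mul_sq_norm hb, integral_const_mul]
  rw [GaussianFourier.integral_rexp_neg_mul_sq_norm (by positivity), mul_assoc,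
    ← mul_rpow (by positivity) (by positivity)]
  have : π / b * (π / (4 * b)⁻¹) = (2 * π) ^ (2 : ℝ) := by
    rw [rpow_two]
    field_simp
    ring
  rw [this, ← rpow_mul (by positivity), mul_div_cancel₀ _ two_ne_zero, rpow_natCast,
    inv_mul_cancel₀ (by positivity)]

end Gaussian

section FourierPositive

variable {V : Type*} [NormedAddCommGroup V] [InnerProductSpace ℝ V] [FiniteDimensional ℝ V]
  [MeasurableSpace V] [BorelSpace V] {φ ψ : V → ℝ}

/-- Positivity of the inverse Fourier transform of `φ` after every Gaussian cut-off. For a bounded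
continuous even function this means that `φ` is positive definite; the cut-off makes the integrals
converge absolutely as soon as `φ` is bounded. -/
def FourierPositive (φ : V → ℝ) : Prop :=
  AEStronglyMeasurable φ ∧
    ∀ ε > 0, ∀ x, 0 ≤ cosTransform (fun z => rexp (-ε * ‖z‖ ^ 2) * φ z) x

namespace FourierPositive

theorem const_mul (hφ : FourierPositive φ) {c : ℝ} (hc : 0 ≤ c) :
    FourierPositive fun z => c * φ z := by
  refine ⟨hφ.1.const_mul c, fun ε hε x => ?_⟩
  simp only [mul_left_comm _ c, cosTransform_const_mul]
  exact mul_nonneg hc (hφ.2 ε hε x)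

theorem of_tendsto {φ : ℕ → V → ℝ} {C : ℝ} (hφ : ∀ n, FourierPositive (φ n))
    (hle : ∀ n z, ‖φ n z‖ ≤ C) (hlim : ∀ z, Tendsto (φ · z) atTop (𝓝 (ψ z))) :
    FourierPositive ψ := by
  refine ⟨aestronglyMeasurable_of_tendsto_ae atTop (fun n => (hφ n).1) (.of_forall hlim),
    fun ε hε x => ?_⟩
  have hgauss : Integrable fun z : V => rexp (-ε * ‖z‖ ^ 2) := integrable_exp_neg_mul_sq_norm hε
  refine ge_of_tendsto' (tendsto_cosTransform (fun n => hgauss.1.mul (hφ n).1)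
    (hgauss.mul_const C) (fun n z => ?_) (fun z => (hlim z).const_mul _) x)
    fun n => (hφ n).2 ε hε x
  rw [Pi.mul_apply, norm_mul, norm_of_nonneg (exp_pos _).le]
  gcongr
  exact hle n z

theorem cosTransform_nonneg (hφ : FourierPositive φ) (hint : Integrable φ) (x : V) :
    0 ≤ cosTransform φ x := by
  have hlim (z : V) : Tendsto (fun n : ℕ => rexp (-(1 / ((n : ℝ) + 1)) * ‖z‖ ^ 2) * φ z)
      atTop (𝓝 (φ z)) := by
    simpa only [one_mul] using (tendsto_exp_neg_one_div_mul_sq_norm z).mul_const (φ z)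
  refine ge_of_tendsto' (tendsto_cosTransform (fun n => ?_) hint.norm (fun n z => ?_) hlim x)
    fun n => hφ.2 _ Nat.one_div_pos_of_nat x
  · exact (Continuous.aestronglyMeasurable (by fun_prop)).mul hφ.1
  · rw [norm_mul, norm_of_nonneg (exp_pos _).le]
    exact mul_le_of_le_one_left (norm_nonneg _)
      (exp_neg_mul_sq_norm_le_one Nat.one_div_pos_of_nat.le z)

end FourierPositive

end FourierPositive

section LaplaceTransform

/-- `g` is, on `[0, ∞)`, the Laplace transform of a finite measure on `[0, ∞)`. -/
def IsLaplaceTransform (g : ℝ → ℝ) : Prop :=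
  ∃ μ : Measure ℝ≥0, IsFiniteMeasure μ ∧ ∀ u ≥ 0, g u = ∫ s, rexp (-(u * s)) ∂μ

theorem exp_neg_mul_le_one {u s : ℝ} (hu : 0 ≤ u) (hs : 0 ≤ s) : rexp (-(u * s)) ≤ 1 :=
  exp_le_one_iff.2 (neg_nonpos.2 (mul_nonneg hu hs))

theorem integrable_exp_neg_mul (μ : Measure ℝ≥0) [IsFiniteMeasure μ] {u : ℝ} (hu : 0 ≤ u) :
    Integrable (fun s : ℝ≥0 => rexp (-(u * s))) μ :=
  .of_bound (by fun_prop) 1 (.of_forall fun s => by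
    rw [norm_of_nonneg (exp_pos _).le]
    exact exp_neg_mul_le_one hu s.2)

theorem isLaplaceTransform_exp_neg_mul (s : ℝ≥0) : IsLaplaceTransform fun u => rexp (-(u * s)) :=
  ⟨.dirac s, inferInstance, fun u _ => by simp⟩

theorem isLaplaceTransform_setIntegral {w : ℝ → ℝ} {A : Set ℝ} (hA : MeasurableSet A)
    (hA0 : A ⊆ Set.Ici 0) (hw : IntegrableOn w A) (hw0 : ∀ s ∈ A, 0 ≤ w s) :
    IsLaplaceTransform fun u => ∫ s in A, w s * rexp (-(u * s)) := by
  have hmeas : AEMeasurable (fun s => ENNReal.ofReal (w s)) (volume.restrict A) :=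
    hw.aemeasurable.ennreal_ofReal
  have := isFiniteMeasure_withDensity_ofReal hw.2
  refine ⟨((volume.restrict A).withDensity fun s => ENNReal.ofReal (w s)).map Real.toNNReal,
    inferInstance, fun u _ => ?_⟩
  rw [integral_map (by fun_prop) (by fun_prop),
    integral_withDensity_eq_integral_toReal_smul₀ hmeas (by simp)]
  refine setIntegral_congr_fun hA fun s hs => ?_
  simp only [smul_eq_mul, ENNReal.toReal_ofReal (hw0 s hs), Real.coe_toNNReal s (hA0 hs)]

namespace IsLaplaceTransform

variable {g h : ℝ → ℝ}

theorem mul (hg : IsLaplaceTransform g) (hh : IsLaplaceTransform h) :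
    IsLaplaceTransform fun u => g u * h u := by
  obtain ⟨μ, hμ, hg⟩ := hg
  obtain ⟨ν, hν, hh⟩ := hh
  refine ⟨(μ.prod ν).map fun p => p.1 + p.2, inferInstance, fun u hu => ?_⟩
  rw [integral_map (by fun_prop) (by fun_prop)]
  simp only [NNReal.coe_add, mul_add, neg_add, Real.exp_add]
  rw [hg u hu, hh u hu, ← integral_prod_mul]

theorem one_add (hg : IsLaplaceTransform g) (c : ℝ≥0) :
    IsLaplaceTransform fun u => 1 + c * g u := by
  obtain ⟨μ, hμ, hg⟩ := hg
  refine ⟨.dirac 0 + c • μ, inferInstance, fun u hu => ?_⟩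
  rw [integral_add_measure (integrable_exp_neg_mul _ hu) (integrable_exp_neg_mul _ hu),
    integral_smul_nnreal_measure, ← hg u hu]
  simp [NNReal.smul_def]

theorem pow (hg : IsLaplaceTransform g) (n : ℕ) : IsLaplaceTransform fun u => g u ^ n := by
  induction n with
  | zero => simpa using isLaplaceTransform_exp_neg_mul 0
  | succ n ih => simpa only [pow_succ] using ih.mul hg

theorem nonneg (hg : IsLaplaceTransform g) {u : ℝ} (hu : 0 ≤ u) : 0 ≤ g u := by
  obtain ⟨μ, -, hg⟩ := hg
  rw [hg u hu]
  positivity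

theorem exists_le (hg : IsLaplaceTransform g) : ∃ C, ∀ u ≥ 0, g u ≤ C := by
  obtain ⟨μ, hμ, hg⟩ := hg
  refine ⟨∫ _, 1 ∂μ, fun u hu => ?_⟩
  rw [hg u hu]
  exact integral_mono (integrable_exp_neg_mul μ hu) (integrable_const _)
    fun s => exp_neg_mul_le_one hu s.2

variable (V : Type*) [NormedAddCommGroup V] [InnerProductSpace ℝ V] [FiniteDimensional ℝ V]
  [MeasurableSpace V] [BorelSpace V]

theorem fourierPositive (hg : IsLaplaceTransform g) :
    FourierPositive fun z : V => g (‖z‖ ^ 2) := by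
  obtain ⟨μ, hμ, hg⟩ := hg
  have hg_norm (z : V) : g (‖z‖ ^ 2) = ∫ s : ℝ≥0, rexp (-(‖z‖ ^ 2 * s)) ∂μ :=
    hg _ (by positivity)
  simp only [hg_norm]
  have hcont : Continuous fun p : V × ℝ≥0 => rexp (-(‖p.1‖ ^ 2 * p.2)) := by fun_prop
  refine ⟨hcont.stronglyMeasurable.integral_prod_right.aestronglyMeasurable, fun ε hε x => ?_⟩
  have hmul (z : V) (s : ℝ≥0) : cos ⟪x, z⟫ * (rexp (-ε * ‖z‖ ^ 2) * rexp (-(‖z‖ ^ 2 * s))) =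
      cos ⟪x, z⟫ * rexp (-(ε + s) * ‖z‖ ^ 2) := by
    rw [← Real.exp_add]
    ring_nf
  have hint : Integrable (fun p : V × ℝ≥0 => cos ⟪x, p.1⟫ * rexp (-(ε + p.2) * ‖p.1‖ ^ 2))
      (volume.prod μ) := by
    refine ((integrable_exp_neg_mul_sq_norm hε).mul_prod (integrable_const (1 : ℝ))).mono
      (Continuous.aestronglyMeasurable (by fun_prop)) (.of_forall fun p => ?_)
    refine (norm_cos_mul_le _ _).trans ?_
    rw [mul_one, norm_of_nonneg (exp_pos _).le, norm_of_nonneg (exp_pos _).le]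
    gcongr
    exact le_add_of_nonneg_right p.2.2
  have hswap : cosTransform (fun z => rexp (-ε * ‖z‖ ^ 2) * ∫ s, rexp (-(‖z‖ ^ 2 * s)) ∂μ) x =
      ∫ s : ℝ≥0, cosTransform (fun z : V => rexp (-(ε + s) * ‖z‖ ^ 2)) x ∂μ := by
    simp only [cosTransform, integral_const_mul]
    rw [← integral_integral_swap hint]
    simp only [← hmul, integral_const_mul]
  rw [hswap]
  exact integral_nonneg fun s =>
    cosTransform_exp_neg_mul_sq_norm_nonneg (add_pos_of_pos_of_nonneg hε s.2) x

theorem fourierPositive_exp (hg : IsLaplaceTransform g) :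
    FourierPositive fun z : V => rexp (g (‖z‖ ^ 2)) := by
  obtain ⟨C, hC⟩ := hg.exists_le
  refine .of_tendsto (φ := fun n z => (1 + (n⁻¹ : ℝ≥0) * g (‖z‖ ^ 2)) ^ n) (C := rexp C)
    (fun n => ((hg.one_add _).pow n).fourierPositive V) (fun n z => ?_) (fun z => ?_)
  · have hg0 : 0 ≤ g (‖z‖ ^ 2) := hg.nonneg (by positivity)
    have hle : n * ((n⁻¹ : ℝ≥0) * g (‖z‖ ^ 2)) ≤ g (‖z‖ ^ 2) := by
      rw [← mul_assoc, NNReal.coe_inv, NNReal.coe_natCast]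
      exact mul_le_of_le_one_left hg0 mul_inv_le_one
    rw [norm_of_nonneg (by positivity)]
    calc (1 + (n⁻¹ : ℝ≥0) * g (‖z‖ ^ 2)) ^ n
        ≤ rexp ((n⁻¹ : ℝ≥0) * g (‖z‖ ^ 2)) ^ n := by
          gcongr
          rw [add_comm]
          exact add_one_le_exp _
      _ = rexp (n * ((n⁻¹ : ℝ≥0) * g (‖z‖ ^ 2))) := (exp_nat_mul _ _).symm
      _ ≤ rexp C := exp_le_exp.2 (hle.trans (hC _ (by positivity)))
  · refine (tendsto_one_add_div_pow_exp (g (‖z‖ ^ 2))).congr fun n => ?_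
    rw [NNReal.coe_inv, NNReal.coe_natCast, div_eq_inv_mul]

end IsLaplaceTransform

end LaplaceTransform

section Subordination

variable (V : Type*) [NormedAddCommGroup V] [InnerProductSpace ℝ V] [FiniteDimensional ℝ V]
  [MeasurableSpace V] [BorelSpace V] {w : ℝ → ℝ}

theorem fourierPositive_exp_neg_setIntegral {A : Set ℝ} (hA : MeasurableSet A)
    (hA0 : A ⊆ Set.Ici 0) (hw : IntegrableOn w A) (hw0 : ∀ s ∈ A, 0 ≤ w s) :
    FourierPositive fun z : V => rexp (-∫ s in A, (1 - rexp (-(‖z‖ ^ 2 * s))) * w s) := by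
  convert ((isLaplaceTransform_setIntegral hA hA0 hw hw0).fourierPositive_exp V).const_mul
    (exp_pos (-∫ s in A, w s)).le using 2 with z
  have hint : IntegrableOn (fun s => w s * rexp (-(‖z‖ ^ 2 * s))) A := by
    refine hw.mul_bdd (c := 1) (Continuous.aestronglyMeasurable (by fun_prop)) ?_
    filter_upwards [ae_restrict_mem hA] with s hs
    rw [norm_of_nonneg (exp_pos _).le]
    exact exp_neg_mul_le_one (by positivity) (hA0 hs)
  rw [← Real.exp_add, neg_add_eq_sub, ← neg_sub, ← integral_sub hw hint]
  congr! 4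
  ring

theorem integrableOn_Ioi_of_one_sub_exp_neg_mul
    (hw : IntegrableOn (fun s => (1 - rexp (-s)) * w s) (Set.Ioi 0)) {δ : ℝ} (hδ : 0 < δ) :
    IntegrableOn w (Set.Ioi δ) := by
  have hδ' : 0 < 1 - rexp (-δ) := by simpa using hδ
  have hquot : IntegrableOn (fun s => (1 - rexp (-s))⁻¹ * ((1 - rexp (-s)) * w s)) (Set.Ioi δ) := by
    refine (hw.mono_set (Set.Ioi_subset_Ioi hδ.le)).bdd_mul (c := (1 - rexp (-δ))⁻¹)
      (Measurable.aestronglyMeasurable (by fun_prop)) ?_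
    filter_upwards [ae_restrict_mem measurableSet_Ioi] with s hs
    have hle : 1 - rexp (-δ) ≤ 1 - rexp (-s) := by
      gcongr
      exact (Set.mem_Ioi.1 hs).le
    rw [norm_inv, norm_of_nonneg (hδ'.le.trans hle)]
    gcongr
  refine hquot.congr_fun (fun s hs => inv_mul_cancel_left₀ (sub_pos.2 ?_).ne' _) measurableSet_Ioi
  exact exp_lt_one_iff.2 (neg_lt_zero.2 (hδ.trans hs))

theorem fourierPositive_exp_neg_integral_Ioi (hw0 : ∀ s > 0, 0 ≤ w s)
    (hw : ∀ u ≥ 0, IntegrableOn (fun s => (1 - rexp (-(u * s))) * w s) (Set.Ioi 0)) :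
    FourierPositive fun z : V =>
      rexp (-∫ s in Set.Ioi 0, (1 - rexp (-(‖z‖ ^ 2 * s))) * w s) := by
  have hδ (n : ℕ) : 0 < 1 / ((n : ℝ) + 1) := Nat.one_div_pos_of_nat
  have hw_tail (n : ℕ) : IntegrableOn w (Set.Ioi (1 / ((n : ℝ) + 1))) :=
    integrableOn_Ioi_of_one_sub_exp_neg_mul (by simpa using hw 1 zero_le_one) (hδ n)
  refine .of_tendsto (C := 1) (fun n : ℕ => fourierPositive_exp_neg_setIntegral V
    (A := Set.Ioi (1 / ((n : ℝ) + 1))) measurableSet_Ioi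
    (Set.Ioi_subset_Ici (hδ n).le) (hw_tail n) fun s hs => hw0 s ((hδ n).trans hs))
    (fun n z => ?_) (fun z => ?_)
  · rw [norm_of_nonneg (exp_pos _).le, exp_le_one_iff, neg_nonpos]
    refine setIntegral_nonneg measurableSet_Ioi fun s hs => ?_
    have hs0 : 0 < s := (hδ n).trans hs
    exact mul_nonneg (sub_nonneg.2 (exp_neg_mul_le_one (by positivity) hs0.le)) (hw0 s hs0)
  · have hlim := (aecover_Ioi_of_Ioi (μ := volume)
      tendsto_one_div_add_atTop_nhds_zero_nat).integral_tendsto_of_countably_generated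
        (hw (‖z‖ ^ 2) (by positivity))
    refine hlim.neg.rexp.congr fun n => ?_
    rw [Measure.restrict_restrict measurableSet_Ioi,
      Set.inter_eq_left.2 (Set.Ioi_subset_Ioi (hδ n).le)]

/-- The constant `C` in `∫_0^∞ (1 - e^{-us}) s^{-1-a} ds = C u ^ a`, equal to `Γ(1 - a) / a`. -/
noncomputable def stableLevyConst (a : ℝ) : ℝ :=
  ∫ s in Set.Ioi (0 : ℝ), (1 - rexp (-s)) * s ^ (-1 - a)

variable {a u : ℝ}

theorem integrableOn_one_sub_exp_neg_mul_rpow_s4 (ha0 : 0 < a) (ha1 : a < 1) (hu : 0 ≤ u) :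
    IntegrableOn (fun s : ℝ => (1 - rexp (-(u * s))) * s ^ (-1 - a)) (Set.Ioi 0) := by
  have hmeas : Measurable fun s : ℝ => (1 - rexp (-(u * s))) * s ^ (-1 - a) := by fun_prop
  rw [← Set.Ioc_union_Ioi_eq_Ioi (zero_le_one' ℝ)]
  refine .union ?_ ?_
  · have hint : IntegrableOn (fun s : ℝ => u * s ^ (-a)) (Set.Ioc 0 1) :=
      ((intervalIntegrable_iff_integrableOn_Ioc_of_le zero_le_one).1
        (intervalIntegral.intervalIntegrable_rpow' (by linarith))).const_mul u
    refine hint.mono' hmeas.aestronglyMeasurable ?_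
    filter_upwards [ae_restrict_mem measurableSet_Ioc] with s hs
    have hs0 : 0 < s := hs.1
    rw [norm_of_nonneg (mul_nonneg (sub_nonneg.2 (exp_neg_mul_le_one hu hs0.le)) (by positivity))]
    calc (1 - rexp (-(u * s))) * s ^ (-1 - a) ≤ (u * s) * s ^ (-1 - a) := by
          gcongr
          linarith [one_sub_le_exp_neg (u * s)]
      _ = u * s ^ (-a) := by
          rw [mul_assoc, ← rpow_one_add' hs0.le (by linarith)]
          ring_nf
  · have hint : IntegrableOn (fun s : ℝ => s ^ (-1 - a)) (Set.Ioi 1) :=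
      integrableOn_Ioi_rpow_of_lt (by linarith) one_pos
    refine hint.mono' hmeas.aestronglyMeasurable ?_
    filter_upwards [ae_restrict_mem measurableSet_Ioi] with s hs
    have hs0 : 0 < s := one_pos.trans hs
    rw [norm_of_nonneg (mul_nonneg (sub_nonneg.2 (exp_neg_mul_le_one hu hs0.le)) (by positivity))]
    exact mul_le_of_le_one_left (by positivity) (sub_le_self _ (exp_pos _).le)

theorem stableLevyConst_pos (ha0 : 0 < a) (ha1 : a < 1) : 0 < stableLevyConst a := by
  have hpos : ∀ s ∈ Set.Ioi (0 : ℝ), 0 < (1 - rexp (-s)) * s ^ (-1 - a) := fun s hs =>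
    mul_pos (by simpa using hs) (rpow_pos_of_pos hs _)
  have hint := integrableOn_one_sub_exp_neg_mul_rpow_s4 ha0 ha1 zero_le_one
  simp only [one_mul] at hint
  rw [stableLevyConst, setIntegral_pos_iff_support_of_nonneg_ae _ hint,
    Set.inter_eq_right.2 fun s hs => Function.mem_support.2 (hpos s hs).ne']
  · simp
  · filter_upwards [ae_restrict_mem measurableSet_Ioi] with s hs using (hpos s hs).le

theorem integral_one_sub_exp_neg_mul_rpow_s4 (ha : 0 < a) (hu : 0 ≤ u) :
    ∫ s in Set.Ioi (0 : ℝ), (1 - rexp (-(u * s))) * s ^ (-1 - a) = u ^ a * stableLevyConst a := by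
  rcases hu.eq_or_lt with rfl | hu
  · simp [zero_rpow ha.ne']
  have hscale := integral_comp_mul_left_Ioi (fun s : ℝ => (1 - rexp (-s)) * s ^ (-1 - a)) 0 hu
  rw [mul_zero, smul_eq_mul, ← stableLevyConst] at hscale
  calc ∫ s in Set.Ioi (0 : ℝ), (1 - rexp (-(u * s))) * s ^ (-1 - a)
      = ∫ s in Set.Ioi (0 : ℝ), u ^ (1 + a) * ((1 - rexp (-(u * s))) * (u * s) ^ (-1 - a)) := by
        refine setIntegral_congr_fun measurableSet_Ioi fun s hs => ?_
        have hcancel : u ^ (1 + a) * u ^ (-1 - a) = 1 := by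
          rw [← rpow_add hu]
          simp
        rw [mul_rpow hu.le (le_of_lt hs)]
        linear_combination (-(1 - rexp (-(u * s))) * s ^ (-1 - a)) * hcancel
    _ = u ^ a * stableLevyConst a := by
        rw [integral_const_mul, hscale, rpow_add hu, rpow_one]
        field_simp

end Subordination

section SubprobDensity

variable {V : Type*} [NormedAddCommGroup V] [InnerProductSpace ℝ V] [FiniteDimensional ℝ V]
  [MeasurableSpace V] [BorelSpace V] {φ p : V → ℝ}

/-- A nonnegative integrable function of mass at most `1`. -/
structure IsSubprobDensity (p : V → ℝ) : Prop where
  nonneg : ∀ x, 0 ≤ p x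
  integrable : Integrable p
  integral_le_one : ∫ x, p x ≤ 1

theorem isSubprobDensity_of_lintegral_le_one (hmeas : AEStronglyMeasurable p)
    (hnonneg : ∀ x, 0 ≤ p x) (hle : ∫⁻ x, ENNReal.ofReal (p x) ≤ 1) : IsSubprobDensity p := by
  have hint : Integrable p :=
    ⟨hmeas, (hasFiniteIntegral_iff_ofReal (.of_forall hnonneg)).2 (hle.trans_lt ENNReal.one_lt_top)⟩
  refine ⟨hnonneg, hint, ENNReal.ofReal_le_one.1 ?_⟩
  rwa [ofReal_integral_eq_lintegral_ofReal hint (.of_forall hnonneg)]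

theorem integral_cosTransform_mul_exp_neg_le_one (hφ : Integrable φ) (hφ1 : ∀ z, φ z ≤ 1)
    {b : ℝ} (hb : 0 < b) : ∫ x, cosTransform φ x * rexp (-b * ‖x‖ ^ 2) ≤ 1 := by
  rw [integral_cosTransform_mul hφ (integrable_exp_neg_mul_sq_norm hb),
    ← integral_cosTransform_exp_neg_mul_sq_norm (V := V) hb]
  refine integral_mono ?_ (integrable_cosTransform_exp_neg_mul_sq_norm hb) fun z =>
    mul_le_of_le_one_left (cosTransform_exp_neg_mul_sq_norm_nonneg hb z) (hφ1 z)
  simpa only [mul_comm] using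
    integrable_cosTransform_mul (integrable_exp_neg_mul_sq_norm hb) hφ

theorem isSubprobDensity_cosTransform (hφ : Integrable φ) (hφ1 : ∀ z, φ z ≤ 1)
    (hpos : ∀ x, 0 ≤ cosTransform φ x) : IsSubprobDensity (cosTransform φ) := by
  have hmeas := (continuous_cosTransform hφ).measurable
  refine isSubprobDensity_of_lintegral_le_one hmeas.aestronglyMeasurable hpos ?_
  let b (n : ℕ) : ℝ := 1 / ((n : ℝ) + 1)
  have hb (n : ℕ) : 0 < b n := Nat.one_div_pos_of_nat
  have hlim (x : V) : Tendsto
      (fun n => ENNReal.ofReal (cosTransform φ x * rexp (-b n * ‖x‖ ^ 2))) atTop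
      (𝓝 (ENNReal.ofReal (cosTransform φ x))) := by
    refine ENNReal.tendsto_ofReal ?_
    simpa only [mul_one] using
      (tendsto_exp_neg_one_div_mul_sq_norm x).const_mul (cosTransform φ x)
  simp only [← fun x => (hlim x).liminf_eq]
  refine (lintegral_liminf_le fun n => by fun_prop).trans
    (liminf_le_of_frequently_le' (.of_forall fun n => ?_))
  rw [← ofReal_integral_eq_lintegral_ofReal
    (integrable_cosTransform_mul hφ (integrable_exp_neg_mul_sq_norm (hb n)))
    (.of_forall fun x => mul_nonneg (hpos x) (exp_pos _).le), ENNReal.ofReal_le_one]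
  exact integral_cosTransform_mul_exp_neg_le_one hφ hφ1 (hb n)

theorem setIntegral_compl_ball_sub_left (p : V → ℝ) (x : V) (R : ℝ) :
    ∫ y in (Metric.ball x R)ᶜ, p (x - y) = ∫ v in (Metric.ball 0 R)ᶜ, p v := by
  have hpre : (fun y => x - y) ⁻¹' (Metric.ball 0 R)ᶜ = (Metric.ball x R)ᶜ := by
    ext y
    simp [dist_eq_norm, norm_sub_rev]
  rw [← hpre]
  exact (volume.measurePreserving_sub_left x).setIntegral_preimage_emb
    (MeasurableEquiv.subLeft x).measurableEmbedding p _

theorem setIntegral_compl_ball_cosTransform_le (hφ : Integrable φ)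
    (hp : IsSubprobDensity (cosTransform φ)) {R : ℝ} (hR : 0 < R) :
    (1 - rexp (-1)) * ∫ x in (Metric.ball 0 R)ᶜ, cosTransform φ x ≤
      ∫ z, (1 - φ z) * cosTransform (fun z => rexp (-(R⁻¹ ^ 2) * ‖z‖ ^ 2)) z := by
  have hb : 0 < R⁻¹ ^ 2 := by positivity
  have hgauss : Integrable fun z : V => rexp (-(R⁻¹ ^ 2) * ‖z‖ ^ 2) :=
    integrable_exp_neg_mul_sq_norm hb
  have hpg := integrable_cosTransform_mul hφ hgauss
  have hint : Integrable fun x => cosTransform φ x * (1 - rexp (-(R⁻¹ ^ 2) * ‖x‖ ^ 2)) := by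
    simpa only [mul_sub, mul_one, Pi.sub_def] using hp.integrable.sub hpg
  calc (1 - rexp (-1)) * ∫ x in (Metric.ball 0 R)ᶜ, cosTransform φ x
      = ∫ x in (Metric.ball 0 R)ᶜ, (1 - rexp (-1)) * cosTransform φ x :=
        (integral_const_mul _ _).symm
    _ ≤ ∫ x in (Metric.ball 0 R)ᶜ, cosTransform φ x * (1 - rexp (-(R⁻¹ ^ 2) * ‖x‖ ^ 2)) := by
        refine setIntegral_mono_on (hp.integrable.const_mul _).integrableOn hint.integrableOn
          Metric.isOpen_ball.measurableSet.compl fun x hx => ?_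
        have hx : R ≤ ‖x‖ := by simpa using hx
        rw [mul_comm, neg_mul, ← mul_pow]
        refine mul_le_mul_of_nonneg_left ?_ (hp.nonneg x)
        gcongr
        exact one_le_pow₀ ((le_inv_mul_iff₀ hR).2 (by simpa using hx))
    _ ≤ ∫ x, cosTransform φ x * (1 - rexp (-(R⁻¹ ^ 2) * ‖x‖ ^ 2)) :=
        setIntegral_le_integral hint (.of_forall fun x =>
          mul_nonneg (hp.nonneg x) (sub_nonneg.2 (exp_neg_mul_sq_norm_le_one hb.le x)))
    _ = (∫ x, cosTransform φ x) -
          ∫ z, φ z * cosTransform (fun z => rexp (-(R⁻¹ ^ 2) * ‖z‖ ^ 2)) z := by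
        simp only [mul_sub, mul_one]
        rw [integral_sub hp.integrable hpg, integral_cosTransform_mul hφ hgauss]
    _ ≤ 1 - ∫ z, φ z * cosTransform (fun z => rexp (-(R⁻¹ ^ 2) * ‖z‖ ^ 2)) z := by
        gcongr
        exact hp.integral_le_one
    _ = ∫ z, (1 - φ z) * cosTransform (fun z => rexp (-(R⁻¹ ^ 2) * ‖z‖ ^ 2)) z := by
        simp only [sub_mul, one_mul]
        rw [integral_sub (integrable_cosTransform_exp_neg_mul_sq_norm hb)
          (by simpa only [mul_comm] using integrable_cosTransform_mul hgauss hφ),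
          integral_cosTransform_exp_neg_mul_sq_norm hb]

end SubprobDensity

section Moments

variable {V : Type*} [NormedAddCommGroup V] [InnerProductSpace ℝ V] [FiniteDimensional ℝ V]
  [MeasurableSpace V] [BorelSpace V]

theorem integrable_norm_rpow_mul_exp_neg_mul_rpow [Nontrivial V] {s p b : ℝ}
    (hs : -(finrank ℝ V : ℝ) < s) (hp : 0 < p) (hb : 0 < b) :
    Integrable fun z : V => ‖z‖ ^ s * rexp (-b * ‖z‖ ^ p) := by
  rw [integrable_fun_norm_addHaar volume (f := fun r => r ^ s * rexp (-b * r ^ p))]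
  have hdim : ((finrank ℝ V - 1 : ℕ) : ℝ) = finrank ℝ V - 1 := by
    rw [Nat.cast_sub (finrank_pos (R := ℝ) (M := V)), Nat.cast_one]
  refine (integrableOn_rpow_mul_exp_neg_mul_rpow (s := (finrank ℝ V - 1 : ℕ) + s)
    (by linarith) hp hb).congr_fun (fun r hr => ?_) measurableSet_Ioi
  simp only [rpow_add (Set.mem_Ioi.1 hr), rpow_natCast, smul_eq_mul, mul_assoc]

theorem integral_norm_rpow_mul_cosTransform_comp_smul (φ : V → ℝ) (s : ℝ) {c : ℝ} (hc : 0 < c) :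
    ∫ x, ‖x‖ ^ s * cosTransform (fun z => φ (c • z)) x =
      c ^ s * ∫ x, ‖x‖ ^ s * cosTransform φ x := by
  have hscale := Measure.integral_comp_inv_smul_of_nonneg volume
    (fun x : V => ‖x‖ ^ s * cosTransform φ x) hc.le
  have hpt (x : V) : ‖x‖ ^ s * cosTransform (fun z => φ (c • z)) x =
      c ^ s * (c ^ finrank ℝ V)⁻¹ * (‖c⁻¹ • x‖ ^ s * cosTransform φ (c⁻¹ • x)) := by
    rw [cosTransform_comp_smul hc, norm_smul, norm_of_nonneg (inv_pos.2 hc).le,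
      mul_rpow (inv_pos.2 hc).le (norm_nonneg _), inv_rpow hc.le]
    field_simp
  simp only [hpt, integral_const_mul]
  rw [hscale, smul_eq_mul]
  field_simp

variable (V) in
/-- The absolute moment of order `s` of the Gaussian probability density on `V` whose
characteristic function is `exp (-‖z‖ ^ 2)`. -/
noncomputable def gaussianAbsMoment (s : ℝ) : ℝ :=
  ∫ x : V, ‖x‖ ^ s * cosTransform (fun z => rexp (-1 * ‖z‖ ^ 2)) x

theorem gaussianAbsMoment_nonneg (s : ℝ) : 0 ≤ gaussianAbsMoment V s :=
  integral_nonneg fun x =>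
    mul_nonneg (by positivity) (cosTransform_exp_neg_mul_sq_norm_nonneg one_pos x)

theorem integral_norm_rpow_mul_cosTransform_gaussian (s : ℝ) {c : ℝ} (hc : 0 < c) :
    ∫ x : V, ‖x‖ ^ s * cosTransform (fun z => rexp (-(c ^ 2) * ‖z‖ ^ 2)) x =
      c ^ s * gaussianAbsMoment V s := by
  rw [gaussianAbsMoment, ← integral_norm_rpow_mul_cosTransform_comp_smul _ s hc]
  simp only [norm_smul, norm_of_nonneg hc.le, mul_pow, neg_mul, one_mul]

variable [Nontrivial V]

theorem integrable_norm_rpow_mul_cosTransform_gaussian {s b : ℝ} (hs : -(finrank ℝ V : ℝ) < s)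
    (hb : 0 < b) :
    Integrable fun x : V => ‖x‖ ^ s * cosTransform (fun z => rexp (-b * ‖z‖ ^ 2)) x := by
  simp only [cosTransform_exp_neg_mul_sq_norm hb, mul_left_comm (‖_‖ ^ s)]
  simpa only [rpow_two] using
    (integrable_norm_rpow_mul_exp_neg_mul_rpow hs two_pos (by positivity)).const_mul _

theorem setIntegral_compl_ball_cosTransform_le_rpow {φ : V → ℝ} {K s R : ℝ} (hφ : Integrable φ)
    (hp : IsSubprobDensity (cosTransform φ)) (hs : -(finrank ℝ V : ℝ) < s)
    (hK : ∀ z, 1 - φ z ≤ K * ‖z‖ ^ s) (hR : 0 < R) :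
    ∫ x in (Metric.ball 0 R)ᶜ, cosTransform φ x ≤
      (1 - rexp (-1))⁻¹ * K * gaussianAbsMoment V s / R ^ s := by
  have hpos : 0 < 1 - rexp (-1) := by simp
  have hb : 0 < R⁻¹ ^ 2 := by positivity
  have hmom : Integrable fun z : V =>
      K * (‖z‖ ^ s * cosTransform (fun z => rexp (-(R⁻¹ ^ 2) * ‖z‖ ^ 2)) z) :=
    (integrable_norm_rpow_mul_cosTransform_gaussian hs hb).const_mul K
  have hdefect : Integrable fun z : V =>
      (1 - φ z) * cosTransform (fun z => rexp (-(R⁻¹ ^ 2) * ‖z‖ ^ 2)) z := by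
    simpa only [sub_mul, one_mul, mul_comm (φ _), Pi.sub_def] using
      (integrable_cosTransform_exp_neg_mul_sq_norm hb).sub
        (integrable_cosTransform_mul (integrable_exp_neg_mul_sq_norm hb) hφ)
  have htail : (1 - rexp (-1)) * ∫ x in (Metric.ball 0 R)ᶜ, cosTransform φ x ≤
      K * (R⁻¹ ^ s * gaussianAbsMoment V s) := by
    refine (setIntegral_compl_ball_cosTransform_le hφ hp hR).trans ?_
    rw [← integral_norm_rpow_mul_cosTransform_gaussian s (inv_pos.2 hR), ← integral_const_mul]
    refine integral_mono hdefect hmom fun z => ?_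
    simp only [← mul_assoc]
    exact mul_le_mul_of_nonneg_right (hK z) (cosTransform_exp_neg_mul_sq_norm_nonneg hb z)
  rw [← le_inv_mul_iff₀ hpos, inv_rpow hR.le] at htail
  refine htail.trans_eq ?_
  ring

end Moments

section RieszPotential

variable {V : Type*} [NormedAddCommGroup V] {β M r : ℝ}

/-- An integrable function that dominates the Riesz kernel `‖v‖ ^ (-β)` on the unit ball. -/
noncomputable def localRieszKernel (β : ℝ) (v : V) : ℝ :=
  ‖v‖ ^ (-β) * rexp (1 - ‖v‖)

theorem localRieszKernel_nonneg (β : ℝ) (v : V) : 0 ≤ localRieszKernel β v := by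
  unfold localRieszKernel
  positivity

theorem norm_rpow_neg_le (hβ : 0 ≤ β) (v : V) : ‖v‖ ^ (-β) ≤ 1 + localRieszKernel β v := by
  rcases le_total ‖v‖ 1 with hv | hv
  · refine le_add_of_nonneg_of_le zero_le_one (le_mul_of_one_le_right (by positivity) ?_)
    exact one_le_exp_iff.2 (sub_nonneg.2 hv)
  · exact le_add_of_le_of_nonneg (rpow_le_one_of_one_le_of_nonpos hv (neg_nonpos.2 hβ))
      (localRieszKernel_nonneg β v)

theorem mul_norm_rpow_neg_le [NormedSpace ℝ V] (hβ : 0 ≤ β) (hr : 0 < r) {a : ℝ} (ha : 0 ≤ a)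
    (haM : a ≤ M) (v : V) :
    a * ‖v‖ ^ (-β) ≤ r ^ (-β) * (a + M * localRieszKernel β (r⁻¹ • v)) := by
  have hscale : ‖v‖ ^ (-β) = r ^ (-β) * ‖r⁻¹ • v‖ ^ (-β) := by
    rw [norm_smul, norm_of_nonneg (inv_pos.2 hr).le, ← mul_rpow hr.le (by positivity),
      mul_inv_cancel_left₀ hr.ne']
  have hK := localRieszKernel_nonneg β (r⁻¹ • v)
  calc a * ‖v‖ ^ (-β) = r ^ (-β) * (a * ‖r⁻¹ • v‖ ^ (-β)) := by rw [hscale]; ring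
    _ ≤ r ^ (-β) * (a * (1 + localRieszKernel β (r⁻¹ • v))) := by
        gcongr
        exact norm_rpow_neg_le hβ _
    _ ≤ r ^ (-β) * (a + M * localRieszKernel β (r⁻¹ • v)) := by
        rw [mul_add, mul_one]
        gcongr

variable [InnerProductSpace ℝ V] [FiniteDimensional ℝ V] [MeasurableSpace V] [BorelSpace V]
  [Nontrivial V] {p : V → ℝ}

theorem integrable_localRieszKernel (hβ : β < finrank ℝ V) :
    Integrable (localRieszKernel β : V → ℝ) := by
  refine ((integrable_norm_rpow_mul_exp_neg_mul_rpow (V := V) (s := -β) (by linarith) one_pos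
    one_pos).const_mul (rexp 1)).congr (.of_forall fun v => ?_)
  simp only [localRieszKernel, rpow_one, sub_eq_add_neg, Real.exp_add]
  ring_nf

theorem setIntegral_mul_norm_rpow_neg_le (hp : IsSubprobDensity p)
    (hpM : ∀ x, p x ≤ M) (hβ : 0 ≤ β) (hβV : β < finrank ℝ V) (hr : 0 < r) (x y : V) (B : Set V) :
    ∫ w in B, p (x - w) * ‖y - w‖ ^ (-β) ≤
      r ^ (-β) * (1 + M * r ^ finrank ℝ V * ∫ v : V, localRieszKernel β v) := by
  have hint_p : Integrable fun w => p (x - w) := hp.integrable.comp_sub_left x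
  have hint_K : Integrable fun w => localRieszKernel β (r⁻¹ • (y - w)) :=
    ((integrable_localRieszKernel hβV).comp_smul (inv_ne_zero hr.ne')).comp_sub_left y
  have hM : 0 ≤ M := (hp.nonneg 0).trans (hpM 0)
  have hK_integral : ∫ w, localRieszKernel β (r⁻¹ • (y - w)) =
      r ^ finrank ℝ V * ∫ v : V, localRieszKernel β v := by
    rw [integral_sub_left_eq_self (fun v => localRieszKernel β (r⁻¹ • v)) volume y,
      Measure.integral_comp_inv_smul_of_nonneg _ _ hr.le, smul_eq_mul]
  have hmajor : Integrable fun w =>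
      r ^ (-β) * (p (x - w) + M * localRieszKernel β (r⁻¹ • (y - w))) :=
    (hint_p.add (hint_K.const_mul M)).const_mul _
  calc ∫ w in B, p (x - w) * ‖y - w‖ ^ (-β)
      ≤ ∫ w in B, r ^ (-β) * (p (x - w) + M * localRieszKernel β (r⁻¹ • (y - w))) :=
        integral_mono_of_nonneg (.of_forall fun w => mul_nonneg (hp.nonneg _) (by positivity))
          hmajor.integrableOn
          (.of_forall fun w => mul_norm_rpow_neg_le hβ hr (hp.nonneg _) (hpM _) _)
    _ ≤ ∫ w, r ^ (-β) * (p (x - w) + M * localRieszKernel β (r⁻¹ • (y - w))) :=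
        setIntegral_le_integral hmajor (.of_forall fun w => mul_nonneg (by positivity)
          (add_nonneg (hp.nonneg _) (mul_nonneg hM (localRieszKernel_nonneg β _))))
    _ = r ^ (-β) * ((∫ w, p w) + M * (r ^ finrank ℝ V * ∫ v : V, localRieszKernel β v)) := by
        rw [integral_const_mul, integral_add hint_p (hint_K.const_mul M), integral_const_mul,
          hK_integral, integral_sub_left_eq_self p volume x]
    _ ≤ r ^ (-β) * (1 + M * r ^ finrank ℝ V * ∫ v : V, localRieszKernel β v) := by
        rw [mul_assoc M]
        gcongr
        exact hp.integral_le_one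

theorem integrable_mul_mul_norm_rpow_neg (hp : IsSubprobDensity p)
    (hpM : ∀ x, p x ≤ M) (hβ : 0 ≤ β) (hβV : β < finrank ℝ V) (x : V) :
    Integrable fun yw : V × V => p (x - yw.1) * p (x - yw.2) * ‖yw.1 - yw.2‖ ^ (-β) := by
  have hint_p : Integrable fun w => p (x - w) := hp.integrable.comp_sub_left x
  have hint_pp : Integrable fun yw : V × V => p (x - yw.1) * p (x - yw.2) := hint_p.mul_prod hint_p
  have hint_pK : Integrable fun yw : V × V => p (x - yw.1) * localRieszKernel β (yw.2 - yw.1) :=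
    (hint_p.convolution_integrand (ContinuousLinearMap.mul ℝ ℝ)
      (integrable_localRieszKernel hβV)).swap
  refine (hint_pp.add (hint_pK.const_mul M)).mono'
    (hint_pp.1.mul (Measurable.aestronglyMeasurable (by fun_prop))) (.of_forall fun yw => ?_)
  have hp0 := hp.nonneg
  rw [norm_of_nonneg (by have := hp0 (x - yw.1); have := hp0 (x - yw.2); positivity)]
  have hle := mul_norm_rpow_neg_le hβ one_pos (hp0 (x - yw.2)) (hpM _) (yw.2 - yw.1)
  simp only [one_rpow, one_mul, inv_one, one_smul] at hle
  calc p (x - yw.1) * p (x - yw.2) * ‖yw.1 - yw.2‖ ^ (-β)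
      = p (x - yw.1) * (p (x - yw.2) * ‖yw.2 - yw.1‖ ^ (-β)) := by rw [norm_sub_rev, mul_assoc]
    _ ≤ p (x - yw.1) * (p (x - yw.2) + M * localRieszKernel β (yw.2 - yw.1)) :=
        mul_le_mul_of_nonneg_left hle (hp0 _)
    _ = p (x - yw.1) * p (x - yw.2) + M * (p (x - yw.1) * localRieszKernel β (yw.2 - yw.1)) := by
        ring

theorem setIntegral_prod_mul_mul_norm_rpow_neg_le (hp : IsSubprobDensity p)
    (hpM : ∀ x, p x ≤ M) (hβ : 0 ≤ β) (hβV : β < finrank ℝ V) (hr : 0 < r) (x : V)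
    (A B : Set V) :
    ∫ yw in A ×ˢ B, p (x - yw.1) * p (x - yw.2) * ‖yw.1 - yw.2‖ ^ (-β) ≤
      (∫ y in A, p (x - y)) *
        (r ^ (-β) * (1 + M * r ^ finrank ℝ V * ∫ v : V, localRieszKernel β v)) := by
  have hint := (integrable_mul_mul_norm_rpow_neg hp hpM hβ hβV x).integrableOn (s := A ×ˢ B)
  rw [Measure.volume_eq_prod] at hint ⊢
  rw [setIntegral_prod _ hint, ← integral_mul_const]
  simp only [mul_assoc, integral_const_mul]
  refine integral_mono_of_nonneg (.of_forall fun y => mul_nonneg (hp.nonneg _) ?_)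
    ((hp.integrable.comp_sub_left x).mul_const _).integrableOn (.of_forall fun y => ?_)
  · exact integral_nonneg fun w => mul_nonneg (hp.nonneg _) (by positivity)
  · refine mul_le_mul_of_nonneg_left ?_ (hp.nonneg _)
    simpa only [mul_assoc] using setIntegral_mul_norm_rpow_neg_le hp hpM hβ hβV hr x y B

end RieszPotential

section StableDensity

variable {V : Type*} [NormedAddCommGroup V] {α κ : ℝ}

/-- The characteristic function `z ↦ e^{-κ|z|^α}` of an isotropic `α`-stable law. -/
noncomputable def stableCharFun (κ α : ℝ) (z : V) : ℝ :=
  rexp (-(κ * ‖z‖ ^ α))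

theorem stableCharFun_le_one (hκ : 0 ≤ κ) (z : V) : stableCharFun κ α z ≤ 1 :=
  exp_neg_mul_le_one hκ (by positivity)

theorem one_sub_stableCharFun_le (z : V) : 1 - stableCharFun κ α z ≤ κ * ‖z‖ ^ α :=
  sub_le_comm.1 (one_sub_le_exp_neg _)

theorem stableCharFun_mul_left [NormedSpace ℝ V] (hα : α ≠ 0) {t : ℝ} (ht : 0 ≤ t) (z : V) :
    stableCharFun (t * κ) α z = stableCharFun κ α (t ^ (1 / α) • z) := by
  have hscale : ‖t ^ (1 / α) • z‖ ^ α = t * ‖z‖ ^ α := by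
    rw [norm_smul, norm_of_nonneg (by positivity), mul_rpow (by positivity) (norm_nonneg _),
      ← rpow_mul ht, one_div_mul_cancel hα, rpow_one]
  simp only [stableCharFun, hscale]
  ring_nf

variable [InnerProductSpace ℝ V] [FiniteDimensional ℝ V] [MeasurableSpace V] [BorelSpace V]

theorem integrable_stableCharFun [Nontrivial V] (hα : 0 < α) (hκ : 0 < κ) :
    Integrable (stableCharFun κ α : V → ℝ) := by
  have hdim : (0 : ℝ) < finrank ℝ V := mod_cast finrank_pos
  convert integrable_norm_rpow_mul_exp_neg_mul_rpow (V := V) (neg_lt_zero.2 hdim) hα hκ using 2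
    with z
  rw [stableCharFun, rpow_zero, one_mul, neg_mul]

theorem fourierPositive_stableCharFun (hα : 0 < α) (hα2 : α ≤ 2) (hκ : 0 ≤ κ) :
    FourierPositive (stableCharFun κ α : V → ℝ) := by
  rcases hα2.eq_or_lt with rfl | hα2
  · convert (isLaplaceTransform_exp_neg_mul (.mk κ hκ)).fourierPositive V using 2 with z
    rw [stableCharFun, rpow_two, mul_comm, NNReal.coe_mk]
  have ha0 : 0 < α / 2 := by linarith
  have ha1 : α / 2 < 1 := by linarith
  have hC := stableLevyConst_pos ha0 ha1
  let w (s : ℝ) : ℝ := κ / stableLevyConst (α / 2) * s ^ (-1 - α / 2)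
  have hw0 : ∀ s > 0, 0 ≤ w s := fun s hs => by positivity
  have hw_factor (u s : ℝ) : (1 - rexp (-(u * s))) * w s =
      κ / stableLevyConst (α / 2) * ((1 - rexp (-(u * s))) * s ^ (-1 - α / 2)) :=
    mul_left_comm _ _ _
  have hw : ∀ u ≥ 0, IntegrableOn (fun s => (1 - rexp (-(u * s))) * w s) (Set.Ioi 0) := by
    intro u hu
    simp only [hw_factor]
    exact (integrableOn_one_sub_exp_neg_mul_rpow_s4 ha0 ha1 hu).const_mul _
  convert fourierPositive_exp_neg_integral_Ioi V hw0 hw using 2 with z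
  have hpow : (‖z‖ ^ 2) ^ (α / 2) = ‖z‖ ^ α := by
    rw [← rpow_natCast_mul (norm_nonneg z), Nat.cast_ofNat, mul_div_cancel₀ α two_ne_zero]
  simp only [hw_factor, integral_const_mul]
  rw [integral_one_sub_exp_neg_mul_rpow_s4 ha0 (by positivity), hpow, stableCharFun]
  field_simp

variable [Nontrivial V]

theorem isSubprobDensity_cosTransform_stableCharFun (hα : 0 < α) (hα2 : α ≤ 2) (hκ : 0 < κ) :
    IsSubprobDensity (cosTransform (stableCharFun κ α) : V → ℝ) :=
  isSubprobDensity_cosTransform (integrable_stableCharFun hα hκ) (stableCharFun_le_one hκ.le)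
    ((fourierPositive_stableCharFun hα hα2 hκ.le).cosTransform_nonneg
      (integrable_stableCharFun hα hκ))

theorem cosTransform_stableCharFun_le (hα : 0 < α) (hκ : 0 < κ) {t : ℝ} (ht : 0 < t) (x : V) :
    cosTransform (stableCharFun (t * κ) α) x ≤
      cosTransform (stableCharFun κ α : V → ℝ) 0 * ((t ^ (1 / α)) ^ finrank ℝ V)⁻¹ := by
  have habs (z : V) : |stableCharFun κ α z| = stableCharFun κ α z := abs_of_pos (exp_pos _)
  have hle := (le_abs_self _).trans (abs_cosTransform_le
    (integrable_stableCharFun (V := V) hα hκ) ((t ^ (1 / α))⁻¹ • x))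
  simp only [habs] at hle
  rw [funext (stableCharFun_mul_left (V := V) (κ := κ) hα.ne' ht.le),
    cosTransform_comp_smul (by positivity), mul_comm]
  gcongr

theorem setIntegral_compl_ball_cosTransform_stableCharFun_le (hα : 0 < α) (hα2 : α ≤ 2)
    (hκ : 0 < κ) (x : V) {R : ℝ} (hR : 0 < R) :
    ∫ y in (Metric.ball x R)ᶜ, cosTransform (stableCharFun κ α) (x - y) ≤
      (1 - rexp (-1))⁻¹ * κ * gaussianAbsMoment V α / R ^ α := by
  rw [setIntegral_compl_ball_sub_left]
  exact setIntegral_compl_ball_cosTransform_le_rpow (integrable_stableCharFun hα hκ)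
    (isSubprobDensity_cosTransform_stableCharFun hα hα2 hκ) (by linarith)
    one_sub_stableCharFun_le hR

variable (V) in
/-- The constant in the bound on the heat correlation over `(ball x R)ᶜ × S`: a tail constant times
a potential constant. -/
noncomputable def heatCorrConst (κ α β : ℝ) : ℝ :=
  (1 - rexp (-1))⁻¹ * κ * gaussianAbsMoment V α *
    (1 + cosTransform (stableCharFun κ α : V → ℝ) 0 * ∫ v : V, localRieszKernel β v)

theorem heatCorrConst_nonneg (hα : 0 < α) (hα2 : α ≤ 2) (hκ : 0 < κ) (β : ℝ) :
    0 ≤ heatCorrConst V κ α β := by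
  have hexp : 0 ≤ 1 - rexp (-1) := by simp
  have hmom : 0 ≤ gaussianAbsMoment V α := gaussianAbsMoment_nonneg α
  have hp0 := (isSubprobDensity_cosTransform_stableCharFun (V := V) hα hα2 hκ).nonneg 0
  have hK : 0 ≤ ∫ v : V, localRieszKernel β v := integral_nonneg (localRieszKernel_nonneg β)
  unfold heatCorrConst
  positivity

theorem setIntegral_compl_ball_prod_heatCorr_le {β t R : ℝ} (hα : 0 < α) (hα2 : α ≤ 2)
    (hκ : 0 < κ) (hβ : 0 ≤ β) (hβV : β < finrank ℝ V) (ht : 0 < t) (x : V) (hR : 0 < R)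
    (S : Set V) :
    ∫ yw in (Metric.ball x R)ᶜ ×ˢ S, cosTransform (stableCharFun (t * κ) α) (x - yw.1) *
        cosTransform (stableCharFun (t * κ) α) (x - yw.2) * ‖yw.1 - yw.2‖ ^ (-β) ≤
      heatCorrConst V κ α β * t ^ (1 - β / α) / R ^ α := by
  have htκ : 0 < t * κ := mul_pos ht hκ
  have hr : 0 < t ^ (1 / α) := rpow_pos_of_pos ht _
  have hp := isSubprobDensity_cosTransform_stableCharFun (V := V) hα hα2 htκ
  have hK : 0 ≤ ∫ v : V, localRieszKernel β v := integral_nonneg (localRieszKernel_nonneg β)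
  have hp0 := (isSubprobDensity_cosTransform_stableCharFun (V := V) hα hα2 hκ).nonneg 0
  have hpow : t * (t ^ (1 / α)) ^ (-β) = t ^ (1 - β / α) := by
    rw [← rpow_mul ht.le, sub_eq_add_neg, rpow_add ht, rpow_one]
    ring_nf
  refine (setIntegral_prod_mul_mul_norm_rpow_neg_le hp (cosTransform_stableCharFun_le hα hκ ht)
    hβ hβV hr x _ S).trans ?_
  rw [inv_mul_cancel_right₀ (pow_pos hr _).ne']
  refine (mul_le_mul_of_nonneg_right
    (setIntegral_compl_ball_cosTransform_stableCharFun_le hα hα2 htκ x hR)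
    (by positivity)).trans_eq ?_
  rw [← hpow, heatCorrConst]
  ring

end StableDensity

theorem stableKernel_eq_cosTransform {d : ℕ} [Nontrivial (EuclideanSpace ℝ (Fin d))] {ν α t : ℝ}
    (hα : 0 < α) (hκ : 0 < t * ν) :
    stableKernel d ν α t = cosTransform (stableCharFun (t * ν) α) := by
  ext x
  have hpolar (z : EuclideanSpace ℝ (Fin d)) : Complex.exp (-(Complex.I * (⟪x, z⟫ : ℝ))) *
      Complex.exp (-((t * ν * ‖z‖ ^ α : ℝ) : ℂ)) =
      stableCharFun (t * ν) α z * Complex.exp ((-⟪x, z⟫ : ℝ) * Complex.I) := by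
    rw [stableCharFun, Complex.ofReal_exp, mul_comm]
    push_cast
    ring_nf
  have hint : Integrable fun z : EuclideanSpace ℝ (Fin d) =>
      (stableCharFun (t * ν) α z : ℂ) * Complex.exp ((-⟪x, z⟫ : ℝ) * Complex.I) :=
    (integrable_stableCharFun hα hκ).ofReal.mul_bdd (c := 1)
      (Continuous.aestronglyMeasurable (by fun_prop))
      (.of_forall fun z => (Complex.norm_exp_ofReal_mul_I _).le)
  simp only [stableKernel, cosTransform, finrank_euclideanSpace_fin, hpolar]
  rw [← RCLike.re_to_complex, ← integral_re hint]
  simp only [RCLike.re_to_complex, Complex.re_ofReal_mul, Complex.exp_ofReal_mul_I_re, cos_neg,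
    mul_comm (cos _)]

theorem heat_corr_offBall_ball_general (d : ℕ) (ν α β : ℝ) (hν : 0 < ν) (hα : 0 < α) (hα2 : α ≤ 2)
    (hβ : 0 ≤ β) (hβd : β < d) :
    ∃ c₂ > (0 : ℝ), ∀ (t : ℝ), 0 < t → ∀ (x : EuclideanSpace ℝ (Fin d)) (R : ℝ), 0 < R →
      ∀ S : Set (EuclideanSpace ℝ (Fin d)),
      (∫ yw in (Metric.ball x R)ᶜ ×ˢ S,
          stableKernel d ν α t (x - yw.1) * stableKernel d ν α t (x - yw.2) *
            ‖yw.1 - yw.2‖ ^ (-β))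
        ≤ c₂ * t ^ (1 - β / α) / R ^ α := by
  have hβfin : β < finrank ℝ (EuclideanSpace ℝ (Fin d)) := by
    rwa [finrank_euclideanSpace_fin]
  have : Nontrivial (EuclideanSpace ℝ (Fin d)) :=
    nontrivial_of_finrank_pos (R := ℝ) (mod_cast hβ.trans_lt hβfin)
  refine ⟨heatCorrConst (EuclideanSpace ℝ (Fin d)) ν α β + 1,
    add_pos_of_nonneg_of_pos (heatCorrConst_nonneg hα hα2 hν β) one_pos,
    fun t ht x R hR S => ?_⟩
  rw [stableKernel_eq_cosTransform hα (mul_pos ht hν)]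
  refine (setIntegral_compl_ball_prod_heatCorr_le hα hα2 hν hβ hβfin ht x hR S).trans ?_
  gcongr
  exact le_add_of_nonneg_right zero_le_one

/-- Lemma 2.2(b): for `0 < β < min(α,d)` there is `c₂ > 0` with
`∫_{B(x,R)ᶜ × B(x,R)} p_t(x-y) p_t(x-w) |y-w|^{-β} dy dw ≤ c₂ t^{1-β/α} / R^{α}`. -/
theorem heat_corr_offBall_ball (d : ℕ) (hd : 1 ≤ d) (ν α β : ℝ) (hν : 0 < ν)
    (hα : 0 < α) (hα2 : α ≤ 2) (hβ : 0 < β) (hβα : β < α) (hβd : β < d) :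
    ∃ c₂ > (0 : ℝ), ∀ (t : ℝ), 0 < t → ∀ (x : EuclideanSpace ℝ (Fin d)) (R : ℝ), 0 < R →
      (∫ yw in (Metric.ball x R)ᶜ ×ˢ (Metric.ball x R),
          stableKernel d ν α t (x - yw.1) * stableKernel d ν α t (x - yw.2) *
            ‖yw.1 - yw.2‖ ^ (-β))
        ≤ c₂ * t ^ (1 - β / α) / R ^ α := by
  obtain ⟨c₂, hc₂, hle⟩ := heat_corr_offBall_ball_general d ν α β hν hα hα2 hβ.le hβd
  exact ⟨c₂, hc₂, fun t ht x R hR => hle t ht x R hR (Metric.ball x R)⟩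
end
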